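/- arXiv:2404.07190 — 3 statements merged into one kernel-verified Lean document; each statement's English description precedes it below -/
import Mathlib

section
/- For every λ > 1 there is some C ≥ 1 such that the following holds. Let G be an n-vertex graph in which every vertex has degree between d and λd, and let A ⊆ V(G) be chosen by including each vertex of G independently at random with probability 1/C. Then, with probability tending to 1 as n → ∞, G contains a (d' ± 10^5·λ^5·log n)-nearly-regular subgraph H with d/C ≤ d' ≤ d and A ⊆ V(H). -/
/-- The probability, under the distribution of a `p`-random subset of `Fin n`
(each element included independently with probability `p`), of the event `E`. -/
noncomputable def bernoulliProb (n : ℕ) (p : ℝ) (E : Set (Finset (Fin n))) : ℝ :=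
  ∑ S : Finset (Fin n),
    E.indicator (fun A => p ^ A.card * (1 - p) ^ (n - A.card)) S

/-!
Delete vertices outside `A` and edges of `G` one at a time, at rates under which a vertex `v` loses
neighbours at relative rate `8 + s v`, where `s v` is `1` if the degree of `v` is too high and `-1`
otherwise. Degrees above `λd * exp (-17t/2)` then fall faster than this level, whose relative rate
is `17/2 < 9`, and degrees below `d * exp (-15t/2)` fall more slowly than that level, as `15/2 > 7`.
The two levels meet at time `t = log λ`. The choice of each deletion is derandomised by an
exponential potential that penalizes degrees outside the two levels. Its total increase is
polynomial in `n`, so at the meeting time all degrees are within `O(log n)` of the common level.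
A Chernoff bound shows that with high probability each vertex has so few neighbours in `A` that
forbidding the deletion of `A` hardly changes the rates.
-/

lemma le_or_exists_le_of_weighted_sum_le {ι : Type*} [Fintype ι] {w F : ι → ℝ} {b c : ℝ}
    (hw : ∀ i, 0 ≤ w i) (hw1 : ∑ i, w i < 1)
    (h : (1 - ∑ i, w i) * c + ∑ i, w i * F i ≤ b) : c ≤ b ∨ ∃ i, 0 < w i ∧ F i ≤ b := by
  by_contra! hcon
  obtain ⟨hc, hF⟩ := hcon
  have hsum : ∑ i, w i * b ≤ ∑ i, w i * F i := Finset.sum_le_sum fun i _ => by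
    rcases (hw i).eq_or_lt with h0 | hpos
    · simp [← h0]
    · exact mul_le_mul_of_nonneg_left (hF i hpos).le hpos.le
  rw [← Finset.sum_mul] at hsum
  nlinarith

section Exponential

variable {ε k p U U' L L' : ℝ}

lemma le_one_sub_exp_neg (hε0 : 0 ≤ ε) (hε : ε ≤ 1 / 100) :
    99 / 100 * ε ≤ 1 - Real.exp (-ε) := by
  have h := Real.abs_exp_sub_one_sub_id_le (x := -ε) (by rw [abs_neg, abs_of_nonneg hε0]; linarith)
  nlinarith [(abs_le.1 h).2]

lemma exp_sub_one_le (hε0 : 0 ≤ ε) (hε : ε ≤ 1 / 100) :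
    Real.exp ε - 1 ≤ 101 / 100 * ε := by
  have h := Real.abs_exp_sub_one_sub_id_le (x := ε) (by rw [abs_of_nonneg hε0]; linarith)
  nlinarith [(abs_le.1 h).2]

lemma exp_mul_one_add_le_one {x y : ℝ} (h : x + y ≤ 0) : Real.exp x * (1 + y) ≤ 1 :=
  calc Real.exp x * (1 + y) ≤ Real.exp x * Real.exp y := by
        gcongr
        linarith [Real.add_one_le_exp y]
    _ = Real.exp (x + y) := (Real.exp_add x y).symm
    _ ≤ 1 := Real.exp_le_one_iff.2 h

lemma exp_above_upper_le (hε0 : 0 ≤ ε) (hε : ε ≤ 1 / 100) (hp : 0 ≤ p) (hU : U' ≤ U)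
    (hU1 : U - U' ≤ 1) (hk : U ≤ k → U - U' ≤ 99 / 100 * p) :
    Real.exp (ε * (k - U')) * (1 - p * (1 - Real.exp (-ε))) ≤
      Real.exp (ε * (k - U)) + (U - U') := by
  have hsplit : Real.exp (ε * (k - U')) = Real.exp (ε * (k - U)) * Real.exp (ε * (U - U')) := by
    rw [← Real.exp_add]; ring_nf
  have hc := le_one_sub_exp_neg hε0 hε
  have hpc : 99 / 100 * p * ε ≤ p * (1 - Real.exp (-ε)) := by
    linarith [mul_le_mul_of_nonneg_left hc hp]
  rw [hsplit, mul_assoc]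
  rcases le_or_gt U k with hUk | hkU
  · have hgain : Real.exp (ε * (U - U')) * (1 - p * (1 - Real.exp (-ε))) ≤ 1 := by
      refine exp_mul_one_add_le_one (y := -(p * (1 - Real.exp (-ε)))) ?_
      linarith [mul_le_mul_of_nonneg_left (hk hUk) hε0]
    linarith [mul_le_of_le_one_right (Real.exp_pos (ε * (k - U))).le hgain]
  · have hx0 : 0 ≤ ε * (U - U') := mul_nonneg hε0 (by linarith)
    have hx1 : ε * (U - U') ≤ 1 / 100 * (U - U') := by gcongr
    have hx := Real.abs_exp_sub_one_le (x := ε * (U - U'))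
      (by rw [abs_of_nonneg hx0]; linarith)
    rw [abs_of_nonneg hx0] at hx
    have hone : Real.exp (ε * (k - U)) ≤ 1 :=
      Real.exp_le_one_iff.2 (mul_nonpos_of_nonneg_of_nonpos hε0 (by linarith))
    calc Real.exp (ε * (k - U)) * (Real.exp (ε * (U - U')) * (1 - p * (1 - Real.exp (-ε))))
        ≤ Real.exp (ε * (k - U)) * (1 + (U - U')) := by
          gcongr
          refine (mul_le_of_le_one_right (Real.exp_pos _).le ?_).trans ?_
          · linarith [mul_nonneg hp hε0]
          · linarith [(abs_le.1 hx).2]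
      _ ≤ Real.exp (ε * (k - U)) + (U - U') := by
          linarith [mul_le_of_le_one_left (by linarith : 0 ≤ U - U') hone]

lemma exp_below_lower_le (hε0 : 0 ≤ ε) (hε : ε ≤ 1 / 100) (hp : 0 ≤ p) (hL : L' ≤ L)
    (hk : k < L → 101 / 100 * p ≤ L - L') :
    Real.exp (ε * (L' - k)) * (1 + p * (Real.exp ε - 1)) ≤ Real.exp (ε * (L - k)) + p := by
  have hc := exp_sub_one_le hε0 hε
  have hc0 : 0 ≤ Real.exp ε - 1 := by linarith [Real.add_one_le_exp ε]
  have hpc : p * (Real.exp ε - 1) ≤ 101 / 100 * p * ε := by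
    linarith [mul_le_mul_of_nonneg_left hc hp]
  rcases lt_or_ge k L with hkL | hLk
  · have hsplit : Real.exp (ε * (L' - k)) =
        Real.exp (ε * (L - k)) * Real.exp (-(ε * (L - L'))) := by
      rw [← Real.exp_add]; ring_nf
    have hgain : Real.exp (-(ε * (L - L'))) * (1 + p * (Real.exp ε - 1)) ≤ 1 :=
      exp_mul_one_add_le_one (by linarith [mul_le_mul_of_nonneg_left (hk hkL) hε0])
    rw [hsplit, mul_assoc]
    linarith [mul_le_of_le_one_right (Real.exp_pos (ε * (L - k))).le hgain]
  · have hone : Real.exp (ε * (L - k)) ≤ 1 :=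
      Real.exp_le_one_iff.2 (mul_nonpos_of_nonneg_of_nonpos hε0 (by linarith))
    calc Real.exp (ε * (L' - k)) * (1 + p * (Real.exp ε - 1))
        ≤ Real.exp (ε * (L - k)) * (1 + p) := by
          gcongr
          exact mul_le_of_le_one_right hp (by linarith)
      _ ≤ Real.exp (ε * (L - k)) + p := by linarith [mul_le_of_le_one_left hp hone]

end Exponential

section Deletion

variable {V : Type*} {G : SimpleGraph V}

/-- The degree of `v` in `H` as a real number; it is `0` when `v` is not a vertex of `H`. -/
noncomputable def realDegree (H : G.Subgraph) (v : V) : ℝ := (H.neighborSet v).ncard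

/-- Every vertex of `H` has degree within `B` of `d'`: the paper's `(d' ± B)`-nearly-regular. -/
def IsNearlyRegular (H : G.Subgraph) (d' B : ℝ) : Prop :=
  ∀ v ∈ H.verts, d' - B ≤ realDegree H v ∧ realDegree H v ≤ d' + B

/-- Some `(d' ± B)`-nearly-regular subgraph of `G` with `a ≤ d' ≤ b` contains all of `A`. -/
def HasNearlyRegularSubgraph (G : SimpleGraph V) (A : Set V) (a b B : ℝ) : Prop :=
  ∃ (H : G.Subgraph) (d' : ℝ), a ≤ d' ∧ d' ≤ b ∧ A ⊆ H.verts ∧ IsNearlyRegular H d' B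

/-- The elementary deletions applied to a subgraph: `Sum.inl u` removes the vertex `u`, and
`Sum.inr e` removes the edge `e`. Absent vertices and edges are allowed, with no effect. -/
def deletion (H : G.Subgraph) : V ⊕ Sym2 V → G.Subgraph
  | .inl u => H.deleteVerts {u}
  | .inr e => H.deleteEdges {e}

/-- The number, `0` or `1`, of neighbours that a surviving vertex `v` loses in a deletion. -/
noncomputable def degreeLoss (H : G.Subgraph) (v : V) : V ⊕ Sym2 V → ℝ :=
  Sum.elim ((H.neighborSet v).indicator 1) ((H.incidenceSet v).indicator 1)

lemma realDegree_nonneg (H : G.Subgraph) (v : V) : 0 ≤ realDegree H v := Nat.cast_nonneg _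

lemma HasNearlyRegularSubgraph.mono_left {A : Set V} {a a' b B : ℝ} (ha : a' ≤ a)
    (h : HasNearlyRegularSubgraph G A a b B) : HasNearlyRegularSubgraph G A a' b B := by
  obtain ⟨H, d', hd', hH⟩ := h
  exact ⟨H, d', ha.trans hd', hH⟩

lemma hasNearlyRegularSubgraph_of_le {a b B : ℝ} (A : Set V) (ha : 0 ≤ a) (hab : a ≤ b)
    (haB : a ≤ B) : HasNearlyRegularSubgraph G A a b B := by
  refine ⟨SimpleGraph.toSubgraph ⊥ bot_le, a, le_rfl, hab, Set.subset_univ A, fun v _ => ?_⟩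
  have hdeg : realDegree (SimpleGraph.toSubgraph ⊥ bot_le : G.Subgraph) v = 0 := by
    simp [realDegree, SimpleGraph.Subgraph.neighborSet]
  constructor <;> linarith

lemma verts_deletion_subset (H : G.Subgraph) (i : V ⊕ Sym2 V) :
    (deletion H i).verts ⊆ H.verts := by
  cases i with
  | inl u => exact Set.sdiff_subset
  | inr e => exact subset_rfl

lemma degreeLoss_eq_zero_or_one (H : G.Subgraph) (v : V) (i : V ⊕ Sym2 V) :
    degreeLoss H v i = 0 ∨ degreeLoss H v i = 1 := by
  cases i <;> exact Set.indicator_eq_zero_or_self ..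

lemma degreeLoss_nonneg (H : G.Subgraph) (v : V) (i : V ⊕ Sym2 V) : 0 ≤ degreeLoss H v i := by
  rcases degreeLoss_eq_zero_or_one H v i with h | h <;> simp [h]

lemma realDegree_le_card [Fintype V] (H : G.Subgraph) (v : V) :
    realDegree H v ≤ Fintype.card V := by
  rw [realDegree, ← Nat.card_eq_fintype_card]
  exact_mod_cast Set.ncard_le_card _

open scoped Classical in
lemma card_filter_adj [Fintype V] (H : G.Subgraph) (v : V) :
    (({u | H.Adj v u} : Finset V).card : ℝ) = realDegree H v := by
  rw [realDegree, ← Set.ncard_coe_finset]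
  congr 2
  ext u
  simp

lemma cast_ncard_diff_singleton {α : Type*} [Finite α] (s : Set α) (a : α) :
    ((s \ {a}).ncard : ℝ) = s.ncard - s.indicator 1 a := by
  by_cases ha : a ∈ s
  · rw [Set.indicator_of_mem ha, Pi.one_apply, ← Set.ncard_sdiff_singleton_add_one ha]
    push_cast
    ring
  · rw [Set.indicator_of_notMem ha, Set.sdiff_singleton_eq_self ha, sub_zero]

lemma realDegree_deletion [Finite V] {H : G.Subgraph} {v : V} {i : V ⊕ Sym2 V}
    (hv : v ∈ (deletion H i).verts) :
    realDegree (deletion H i) v = realDegree H v - degreeLoss H v i := by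
  cases i with
  | inl u =>
    have hneighbors : (deletion H (.inl u)).neighborSet v = H.neighborSet v \ {u} := by
      ext w
      have hadj : H.Adj v w → w ∈ H.verts := fun h => H.edge_vert h.symm
      have hvu : v ∈ H.verts ∧ v ≠ u := hv
      simp only [deletion, SimpleGraph.Subgraph.mem_neighborSet,
        SimpleGraph.Subgraph.deleteVerts_adj, Set.mem_sdiff, Set.mem_singleton_iff]
      tauto
    rw [realDegree, hneighbors, cast_ncard_diff_singleton, realDegree, degreeLoss, Sum.elim_inl]
  | inr e =>
    by_cases he : e ∈ H.incidenceSet v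
    · obtain ⟨u, rfl⟩ := Sym2.mem_iff_exists.1 he.2
      have hneighbors : (deletion H (.inr s(v, u))).neighborSet v = H.neighborSet v \ {u} := by
        ext w
        have hne : H.Adj v w → v ≠ w := fun h => h.ne
        simp only [deletion, SimpleGraph.Subgraph.mem_neighborSet,
          SimpleGraph.Subgraph.deleteEdges_adj, Set.mem_singleton_iff, Sym2.eq, Sym2.rel_iff',
          Prod.mk.injEq, true_and, Prod.swap_prod_mk, not_or, not_and, Set.mem_sdiff,
          and_congr_right_iff, and_iff_left_iff_imp]
        grind
      have hu : u ∈ H.neighborSet v := he.1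
      rw [realDegree, hneighbors, cast_ncard_diff_singleton, realDegree, degreeLoss, Sum.elim_inr,
        Set.indicator_of_mem hu, Set.indicator_of_mem he, Pi.one_apply, Pi.one_apply]
    · have hneighbors : (deletion H (.inr e)).neighborSet v = H.neighborSet v := by
        ext w
        have hedge : H.Adj v w → s(v, w) ≠ e := by
          rintro h rfl
          exact he ⟨h, Sym2.mem_mk_left v w⟩
        simpa [deletion] using hedge
      rw [realDegree, hneighbors, degreeLoss, Sum.elim_inr, Set.indicator_of_notMem he, sub_zero,
        realDegree]

open scoped Classical in
lemma sum_mul_degreeLoss [Fintype V] (H : G.Subgraph) (w : V ⊕ Sym2 V → ℝ) (v : V) :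
    ∑ i, w i * degreeLoss H v i = ∑ u with H.Adj v u, (w (.inl u) + w (.inr s(v, u))) := by
  have hincident : ({e | e ∈ H.incidenceSet v} : Finset (Sym2 V)) =
      ({u | H.Adj v u} : Finset V).image (fun u => s(v, u)) := by
    ext e
    simp only [SimpleGraph.Subgraph.incidenceSet, Set.mem_sep_iff, Finset.mem_filter,
      Finset.mem_univ, true_and, Finset.mem_image]
    constructor
    · rintro ⟨he, hv⟩
      obtain ⟨u, rfl⟩ := Sym2.mem_iff_exists.1 hv
      exact ⟨u, he, rfl⟩
    · rintro ⟨u, hu, rfl⟩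
      exact ⟨hu, Sym2.mem_mk_left v u⟩
  have hvertices : ∑ u, w (.inl u) * degreeLoss H v (.inl u) =
      ∑ u with H.Adj v u, w (.inl u) := by
    simp [degreeLoss, Set.indicator_apply, Finset.sum_filter]
  have hedges : ∑ e, w (.inr e) * degreeLoss H v (.inr e) =
      ∑ u with H.Adj v u, w (.inr s(v, u)) := by
    rw [← Finset.sum_image (g := fun u => s(v, u)) (f := fun e => w (.inr e))
      fun _ _ _ _ h => Sym2.congr_right.1 h, ← hincident]
    simp [degreeLoss, Set.indicator_apply, Finset.sum_filter]
  rw [Fintype.sum_sum_type, hvertices, hedges, Finset.sum_add_distrib]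

end Deletion

section Potential

variable {V : Type*} [Fintype V] {G : SimpleGraph V}

open scoped Classical in
/-- The exponential penalty, of strength `ε`, for degrees of `H` above `U` or below `L`. -/
noncomputable def potential (ε : ℝ) (H : G.Subgraph) (U L : ℝ) : ℝ :=
  ∑ v with v ∈ H.verts,
    (Real.exp (ε * (realDegree H v - U)) + Real.exp (ε * (L - realDegree H v)))

open scoped Classical in
/-- The expectation of `potential ε H U L` when the degree of each vertex `v` drops by one with
probability `p v`. -/
noncomputable def meanPotential (ε : ℝ) (H : G.Subgraph) (U L : ℝ) (p : V → ℝ) : ℝ :=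
  ∑ v with v ∈ H.verts,
    (Real.exp (ε * (realDegree H v - U)) * (1 - p v * (1 - Real.exp (-ε))) +
      Real.exp (ε * (L - realDegree H v)) * (1 + p v * (Real.exp ε - 1)))

lemma potential_deletion_le (ε : ℝ) (H : G.Subgraph) (U L : ℝ) (i : V ⊕ Sym2 V) :
    potential ε (deletion H i) U L ≤ meanPotential ε H U L (degreeLoss H · i) := by
  classical
  have hterm (v : V) :
      Real.exp (ε * (realDegree H v - U)) * (1 - degreeLoss H v i * (1 - Real.exp (-ε))) +
        Real.exp (ε * (L - realDegree H v)) * (1 + degreeLoss H v i * (Real.exp ε - 1)) =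
      Real.exp (ε * (realDegree H v - degreeLoss H v i - U)) +
        Real.exp (ε * (L - (realDegree H v - degreeLoss H v i))) := by
    rcases degreeLoss_eq_zero_or_one H v i with h | h <;> rw [h]
    · simp
    · have hup : ε * (realDegree H v - 1 - U) = ε * (realDegree H v - U) + -ε := by ring
      have hlow : ε * (L - (realDegree H v - 1)) = ε * (L - realDegree H v) + ε := by ring
      rw [hup, hlow, Real.exp_add, Real.exp_add]
      ring
  simp only [potential, meanPotential, hterm]
  calc _ = ∑ v with v ∈ (deletion H i).verts,
          (Real.exp (ε * (realDegree H v - degreeLoss H v i - U)) +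
            Real.exp (ε * (L - (realDegree H v - degreeLoss H v i)))) :=
        Finset.sum_congr rfl fun v hv => by rw [realDegree_deletion (Finset.mem_filter.1 hv).2]
    _ ≤ _ := Finset.sum_le_sum_of_subset_of_nonneg
        (Finset.monotone_filter_right _ fun v _ hv => verts_deletion_subset H i hv)
        fun v _ _ => by positivity

lemma sum_mul_meanPotential {ι : Type*} [Fintype ι] (ε : ℝ) (H : G.Subgraph) (U L : ℝ)
    (w : ι → ℝ) (p : ι → V → ℝ) :
    (1 - ∑ i, w i) * potential ε H U L + ∑ i, w i * meanPotential ε H U L (p i) =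
      meanPotential ε H U L (fun v => ∑ i, w i * p i v) := by
  simp only [potential, meanPotential, Finset.mul_sum]
  rw [Finset.sum_comm, ← Finset.sum_add_distrib]
  refine Finset.sum_congr rfl fun v _ => ?_
  have hw (x y c c' : ℝ) : ∑ i, w i * (x * (1 - p i v * c) + y * (1 + p i v * c')) =
      (x + y) * ∑ i, w i + (y * c' - x * c) * ∑ i, w i * p i v := by
    rw [Finset.mul_sum, Finset.mul_sum, ← Finset.sum_add_distrib]
    exact Finset.sum_congr rfl fun i _ => by ring
  rw [hw]
  ring

lemma exists_potential_le_meanPotential {H : G.Subgraph} {A : Set V} (hAH : A ⊆ H.verts)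
    {w : V ⊕ Sym2 V → ℝ} (hw : ∀ i, 0 ≤ w i) (hw1 : ∑ i, w i < 1) (hwA : ∀ u ∈ A, w (.inl u) = 0)
    (ε U L : ℝ) :
    ∃ H' : G.Subgraph, A ⊆ H'.verts ∧
      potential ε H' U L ≤ meanPotential ε H U L (fun v => ∑ i, w i * degreeLoss H v i) := by
  rw [← sum_mul_meanPotential ε H U L w (fun i v => degreeLoss H v i)]
  have hmean : (1 - ∑ i, w i) * potential ε H U L +
      ∑ i, w i * potential ε (deletion H i) U L ≤
        (1 - ∑ i, w i) * potential ε H U L +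
          ∑ i, w i * meanPotential ε H U L (degreeLoss H · i) := by
    gcongr with i
    · exact hw i
    · exact potential_deletion_le ε H U L i
  obtain hH | ⟨i, hi, hH⟩ := le_or_exists_le_of_weighted_sum_le hw hw1 hmean
  · exact ⟨H, hAH, hH⟩
  · refine ⟨deletion H i, ?_, hH⟩
    cases i with
    | inl u => exact Set.subset_sdiff_singleton hAH fun hu => hi.ne' (hwA u hu)
    | inr e => exact hAH

lemma meanPotential_le {ε U U' L L' c : ℝ} (hε0 : 0 ≤ ε) (hε : ε ≤ 1 / 100) (H : G.Subgraph)
    {p : V → ℝ} (hU : U' ≤ U) (hU1 : U - U' ≤ 1) (hL : L' ≤ L) (hp : ∀ v, 0 ≤ p v) (hc : 0 ≤ c)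
    (hpc : ∀ v, p v ≤ c)
    (hupper : ∀ v, U ≤ realDegree H v → U - U' ≤ 99 / 100 * p v)
    (hlower : ∀ v, realDegree H v < L → 101 / 100 * p v ≤ L - L') :
    meanPotential ε H U' L' p ≤ potential ε H U L + Fintype.card V * (U - U' + c) := by
  classical
  calc meanPotential ε H U' L' p
      ≤ ∑ v with v ∈ H.verts, (Real.exp (ε * (realDegree H v - U)) +
          Real.exp (ε * (L - realDegree H v)) + (U - U' + c)) := by
        refine Finset.sum_le_sum fun v _ => ?_
        linarith [exp_above_upper_le hε0 hε (hp v) hU hU1 (hupper v),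
          exp_below_lower_le hε0 hε (hp v) hL (hlower v), hpc v]
    _ ≤ potential ε H U L + Fintype.card V * (U - U' + c) := by
        rw [Finset.sum_add_distrib, Finset.sum_const, nsmul_eq_mul, potential]
        gcongr
        exact_mod_cast Finset.card_le_univ _

end Potential

section BalancedRates

variable {V : Type*} [Fintype V] {G : SimpleGraph V} {H : G.Subgraph} {A : Set V} {s : V → ℝ}

open scoped Classical in
/-- The average of `s` over the neighbours of `v` in `H`; it is `0` if `v` has no neighbours. -/
noncomputable def neighborMean (H : G.Subgraph) (s : V → ℝ) (v : V) : ℝ :=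
  (∑ u with H.Adj v u, s u) / realDegree H v

open scoped Classical in
/-- The rates of the elementary deletions. The neighbour averages in the vertex and edge rates
cancel in such a way that each vertex `v` far from `A` loses neighbours at total rate
`(8 + s v) * realDegree H v`. -/
noncomputable def deletionRate (H : G.Subgraph) (A : Set V) (s : V → ℝ) : V ⊕ Sym2 V → ℝ :=
  Sum.elim (fun u => if u ∈ A then 0 else 4 + neighborMean H s u)
    (Sym2.lift ⟨fun u v => 4 + (s u - neighborMean H s u) + (s v - neighborMean H s v),
      fun _ _ => by ring⟩)

open scoped Classical in
lemma realDegree_mul_neighborMean (H : G.Subgraph) (s : V → ℝ) (v : V) :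
    realDegree H v * neighborMean H s v = ∑ u with H.Adj v u, s u := by
  refine mul_div_cancel_of_imp' fun h0 => ?_
  rw [← card_filter_adj, Nat.cast_eq_zero, Finset.card_eq_zero] at h0
  rw [h0, Finset.sum_empty]

lemma abs_neighborMean_le (hs : ∀ v, |s v| ≤ 1) (v : V) : |neighborMean H s v| ≤ 1 := by
  classical
  rw [neighborMean, abs_div, abs_of_nonneg (realDegree_nonneg H v)]
  refine div_le_one_of_le₀ ?_ (realDegree_nonneg H v)
  calc |∑ u with H.Adj v u, s u| ≤ ∑ u with H.Adj v u, |s u| := Finset.abs_sum_le_sum_abs _ _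
    _ ≤ ∑ u with H.Adj v u, 1 := Finset.sum_le_sum fun u _ => hs u
    _ = realDegree H v := by rw [← card_filter_adj, Finset.sum_const, nsmul_one]

lemma deletionRate_mem_Icc (hs : ∀ v, |s v| ≤ 1) (i : V ⊕ Sym2 V) :
    deletionRate H A s i ∈ Set.Icc 0 8 := by
  have hmean (v : V) := abs_le.1 (abs_neighborMean_le (H := H) hs v)
  have hs' (v : V) := abs_le.1 (hs v)
  rcases i with u | e
  · simp only [deletionRate, Sum.elim_inl]
    split_ifs
    · norm_num
    · constructor <;> linarith [hmean u]
  · induction e with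
    | h u v =>
      simp only [deletionRate, Sum.elim_inr, Sym2.lift_mk]
      constructor <;> linarith [hmean u, hmean v, hs' u, hs' v]

open scoped Classical in
lemma sum_balanced_rates (H : G.Subgraph) (s : V → ℝ) (v : V) :
    ∑ u with H.Adj v u, ((4 + neighborMean H s u) + deletionRate H A s (.inr s(v, u))) =
      realDegree H v * (8 + s v) := by
  have hterm (u : V) : (4 + neighborMean H s u) + deletionRate H A s (.inr s(v, u)) =
      (8 + s v - neighborMean H s v) + s u := by
    simp only [deletionRate, Sum.elim_inr, Sym2.lift_mk]
    ring
  simp_rw [hterm]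
  rw [Finset.sum_add_distrib, ← realDegree_mul_neighborMean H s, Finset.sum_const, nsmul_eq_mul,
    card_filter_adj]
  ring

/-- The total rate at which `v` loses neighbours under the rates `deletionRate H A s`. -/
noncomputable def lossRate (H : G.Subgraph) (A : Set V) (s : V → ℝ) (v : V) : ℝ :=
  ∑ i, deletionRate H A s i * degreeLoss H v i

lemma lossRate_nonneg (hs : ∀ v, |s v| ≤ 1) (v : V) : 0 ≤ lossRate H A s v :=
  Finset.sum_nonneg fun i _ =>
    mul_nonneg (deletionRate_mem_Icc hs i).1 (degreeLoss_nonneg H v i)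

lemma lossRate_le (hs : ∀ v, |s v| ≤ 1) (v : V) :
    lossRate H A s v ≤ realDegree H v * (8 + s v) := by
  classical
  rw [lossRate, sum_mul_degreeLoss, ← sum_balanced_rates (A := A)]
  refine Finset.sum_le_sum fun u _ => add_le_add_left ?_ _
  have hmean := abs_le.1 (abs_neighborMean_le (H := H) hs u)
  simp only [deletionRate, Sum.elim_inl]
  split_ifs <;> linarith

/-- Each neighbour `u ∈ A` costs the rate `4 + neighborMean H s u ≤ 5` of deleting `u`. -/
lemma le_lossRate (hs : ∀ v, |s v| ≤ 1) (v : V) :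
    realDegree H v * (8 + s v) - 5 * (H.neighborSet v ∩ A).ncard ≤
      lossRate H A s v := by
  classical
  have hcard : ((H.neighborSet v ∩ A).ncard : ℝ) =
      ∑ u with H.Adj v u, if u ∈ A then 1 else 0 := by
    rw [Finset.sum_boole, Finset.filter_filter, ← Set.ncard_coe_finset]
    congr 2
    ext u
    simp
  rw [lossRate, sum_mul_degreeLoss, ← sum_balanced_rates (A := A), hcard, Finset.mul_sum,
    ← Finset.sum_sub_distrib]
  refine Finset.sum_le_sum fun u _ => ?_
  have hmean := abs_le.1 (abs_neighborMean_le (H := H) hs u)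
  simp only [deletionRate, Sum.elim_inl]
  split_ifs <;> linarith

lemma lossRate_le_card (hs : ∀ v, |s v| ≤ 1) (v : V) : lossRate H A s v ≤ 9 * Fintype.card V :=
  calc lossRate H A s v ≤ realDegree H v * (8 + s v) := lossRate_le hs v
    _ ≤ realDegree H v * 9 := by
        have := realDegree_nonneg H v
        gcongr
        linarith [(abs_le.1 (hs v)).2]
    _ ≤ 9 * Fintype.card V := by linarith [realDegree_le_card H v]

lemma exists_potential_le_meanPotential_lossRate {h : ℝ} (hs : ∀ v, |s v| ≤ 1) (hh : 0 ≤ h)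
    (hh1 : 8 * h * Fintype.card (V ⊕ Sym2 V) < 1) (hAH : A ⊆ H.verts) (ε U L : ℝ) :
    ∃ H' : G.Subgraph, A ⊆ H'.verts ∧
      potential ε H' U L ≤ meanPotential ε H U L (fun v => h * lossRate H A s v) := by
  have hweight : ∑ i, h * deletionRate H A s i < 1 := by
    calc ∑ i, h * deletionRate H A s i
        ≤ ∑ i : V ⊕ Sym2 V, h * 8 := Finset.sum_le_sum fun i _ =>
          mul_le_mul_of_nonneg_left (deletionRate_mem_Icc hs i).2 hh
      _ = 8 * h * Fintype.card (V ⊕ Sym2 V) := by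
          rw [Finset.sum_const, nsmul_eq_mul, Finset.card_univ]
          ring
      _ < 1 := hh1
  have hexists := exists_potential_le_meanPotential hAH
    (fun i => mul_nonneg hh (deletionRate_mem_Icc hs i).1) hweight
    (fun u hu => by simp [deletionRate, hu]) ε U L
  simpa only [lossRate, Finset.mul_sum, mul_assoc] using hexists

/-- The sign that makes `lossRate` large on the vertices of degree at least `U` and small on the
others. -/
noncomputable def excessSign (H : G.Subgraph) (U : ℝ) (v : V) : ℝ :=
  if U ≤ realDegree H v then 1 else -1

omit [Fintype V] in
lemma abs_excessSign_le (H : G.Subgraph) (U : ℝ) (v : V) : |excessSign H U v| ≤ 1 := by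
  unfold excessSign
  split_ifs <;> simp

lemma exists_potential_le_of_step {ε h τ U U' L L' : ℝ} (hε0 : 0 ≤ ε) (hε : ε ≤ 1 / 100)
    (hh : 0 ≤ h) (hh1 : 8 * h * Fintype.card (V ⊕ Sym2 V) < 1) (hAH : A ⊆ H.verts)
    (hA : ∀ v, ((G.neighborSet v ∩ A).ncard : ℝ) ≤ τ) (hτ : 20 * τ ≤ U) (hLU : L ≤ U)
    (hU : U' ≤ U) (hU1 : U - U' ≤ 1) (hUh : U - U' ≤ 17 / 2 * h * U)
    (hL : L' ≤ L) (hLh : 36 / 5 * h * L ≤ L - L') :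
    ∃ H' : G.Subgraph, A ⊆ H'.verts ∧ potential ε H' U' L' ≤
      potential ε H U L + Fintype.card V * (U - U' + 9 * h * Fintype.card V) := by
  have hs := abs_excessSign_le H U
  obtain ⟨H', hAH', hH'⟩ := exists_potential_le_meanPotential_lossRate hs hh hh1 hAH ε U' L'
  refine ⟨H', hAH', hH'.trans ?_⟩
  refine meanPotential_le hε0 hε H hU hU1 hL (fun v => mul_nonneg hh (lossRate_nonneg hs v))
    (by positivity) (fun v => ?_) (fun v hUv => ?_) (fun v hvL => ?_)
  · linarith [mul_le_mul_of_nonneg_left (lossRate_le_card (H := H) (A := A) hs v) hh]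
  · have hsign : excessSign H U v = 1 := if_pos hUv
    have hτv : ((H.neighborSet v ∩ A).ncard : ℝ) ≤ τ := by
      refine le_trans ?_ (hA v)
      exact_mod_cast Set.ncard_le_ncard (Set.inter_subset_inter_left A (H.neighborSet_subset v))
    have hloss : 35 / 4 * U ≤ lossRate H A (excessSign H U) v := by
      have hle := le_lossRate (H := H) (A := A) hs v
      rw [hsign] at hle
      linarith
    have hU0 : 0 ≤ U := by
      have : (0 : ℝ) ≤ (H.neighborSet v ∩ A).ncard := Nat.cast_nonneg _
      linarith
    linarith [mul_le_mul_of_nonneg_left hloss hh, mul_nonneg hh hU0]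
  · have hsign : excessSign H U v = -1 := if_neg (by linarith)
    have hloss : lossRate H A (excessSign H U) v ≤ 7 * L := by
      have hle := lossRate_le (H := H) (A := A) hs v
      rw [hsign] at hle
      linarith
    have hL0 : 0 ≤ L := by linarith [realDegree_nonneg H v]
    linarith [mul_le_mul_of_nonneg_left hloss hh, mul_nonneg hh hL0]

end BalancedRates

section Levels

variable {lam d h t : ℝ}

/-- The level above which degrees are penalized at time `t`. The factor `17 / 2` lies below the
rate `9` at which a vertex of high degree loses neighbours. -/
noncomputable def upperLevel (lam d t : ℝ) : ℝ := lam * d * Real.exp (-(17 / 2 * t))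

/-- The level below which degrees are penalized at time `t`. The factor `15 / 2` lies above the
rate `7` at which a vertex of low degree loses neighbours. -/
noncomputable def lowerLevel (d t : ℝ) : ℝ := d * Real.exp (-(15 / 2 * t))

lemma upperLevel_log (hlam : 0 < lam) (d : ℝ) :
    upperLevel lam d (Real.log lam) = lowerLevel d (Real.log lam) := by
  have hsplit : -(15 / 2 * Real.log lam) = Real.log lam + -(17 / 2 * Real.log lam) := by ring
  rw [upperLevel, lowerLevel, hsplit, Real.exp_add, Real.exp_log hlam]
  ring

lemma lowerLevel_le_upperLevel (hlam : 0 < lam) (hd : 0 ≤ d) (ht : t ≤ Real.log lam) :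
    lowerLevel d t ≤ upperLevel lam d t := by
  have hexp : Real.exp (-(15 / 2 * t)) ≤ lam * Real.exp (-(17 / 2 * t)) := by
    calc Real.exp (-(15 / 2 * t)) ≤ Real.exp (Real.log lam + -(17 / 2 * t)) :=
          Real.exp_le_exp.2 (by linarith)
      _ = lam * Real.exp (-(17 / 2 * t)) := by rw [Real.exp_add, Real.exp_log hlam]
  rw [lowerLevel, upperLevel, mul_comm lam, mul_assoc]
  gcongr

lemma antitone_upperLevel (hlam : 0 ≤ lam) (hd : 0 ≤ d) : Antitone (upperLevel lam d) := by
  intro x y hxy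
  unfold upperLevel
  gcongr

lemma antitone_lowerLevel (hd : 0 ≤ d) : Antitone (lowerLevel d) := by
  intro x y hxy
  unfold lowerLevel
  gcongr

lemma lowerLevel_zero (d : ℝ) : lowerLevel d 0 = d := by simp [lowerLevel]

lemma upperLevel_zero (lam d : ℝ) : upperLevel lam d 0 = lam * d := by simp [upperLevel]

lemma div_pow_le_lowerLevel_log (hlam : 1 ≤ lam) (hd : 0 ≤ d) :
    d / lam ^ 8 ≤ lowerLevel d (Real.log lam) := by
  have hpow : Real.exp (-(8 * Real.log lam)) = (lam ^ 8)⁻¹ := by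
    rw [Real.exp_neg, mul_comm, Real.exp_mul, Real.exp_log (by linarith)]
    norm_cast
  rw [lowerLevel, div_eq_mul_inv, ← hpow]
  gcongr
  · exact Real.log_nonneg hlam
  · norm_num

lemma upperLevel_sub_le (hlam : 0 ≤ lam) (hd : 0 ≤ d) (h t : ℝ) :
    upperLevel lam d t - upperLevel lam d (t + h) ≤ 17 / 2 * h * upperLevel lam d t := by
  have hstep : upperLevel lam d (t + h) = upperLevel lam d t * Real.exp (-(17 / 2 * h)) := by
    rw [upperLevel, upperLevel, mul_assoc (lam * d), ← Real.exp_add]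
    ring_nf
  have hU : 0 ≤ upperLevel lam d t := by unfold upperLevel; positivity
  rw [hstep]
  linarith [mul_le_mul_of_nonneg_left (Real.add_one_le_exp (-(17 / 2 * h))) hU]

lemma mul_le_lowerLevel_sub (hd : 0 ≤ d) (hh : 0 ≤ h) (hh1 : 200 * h ≤ 1) (t : ℝ) :
    36 / 5 * h * lowerLevel d t ≤ lowerLevel d t - lowerLevel d (t + h) := by
  have hstep : lowerLevel d (t + h) = lowerLevel d t * Real.exp (-(15 / 2 * h)) := by
    rw [lowerLevel, lowerLevel, mul_assoc, ← Real.exp_add]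
    ring_nf
  have hL : 0 ≤ lowerLevel d t := by unfold lowerLevel; positivity
  have hexp := Real.abs_exp_sub_one_sub_id_le (x := -(15 / 2 * h))
    (by rw [abs_neg, abs_of_nonneg (by positivity)]; linarith)
  have hdrop : Real.exp (-(15 / 2 * h)) ≤ 1 - 36 / 5 * h := by nlinarith [(abs_le.1 hexp).2]
  rw [hstep]
  linarith [mul_le_mul_of_nonneg_left hdrop hL]

end Levels

section Equalization

variable {V : Type*} [Fintype V] {G : SimpleGraph V} {A : Set V} {lam d ε τ : ℝ}

lemma potential_le_two_mul_card {H : G.Subgraph} {U L : ℝ} (hε0 : 0 ≤ ε)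
    (hdeg : ∀ v, L ≤ realDegree H v ∧ realDegree H v ≤ U) :
    potential ε H U L ≤ Fintype.card V * 2 := by
  classical
  calc potential ε H U L ≤ ∑ v with v ∈ H.verts, (2 : ℝ) := by
        refine Finset.sum_le_sum fun v _ => ?_
        have hup : ε * (realDegree H v - U) ≤ 0 :=
          mul_nonpos_of_nonneg_of_nonpos hε0 (by linarith [hdeg v])
        have hlow : ε * (L - realDegree H v) ≤ 0 :=
          mul_nonpos_of_nonneg_of_nonpos hε0 (by linarith [hdeg v])
        linarith [Real.exp_le_one_iff.2 hup, Real.exp_le_one_iff.2 hlow]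
    _ ≤ Fintype.card V * 2 := by
        rw [Finset.sum_const, nsmul_eq_mul]
        gcongr
        exact_mod_cast Finset.card_le_univ _

lemma isNearlyRegular_of_potential_le {H : G.Subgraph} {D B : ℝ} (hε : 0 < ε)
    (hH : potential ε H D D ≤ Real.exp (ε * B)) : IsNearlyRegular H D B := by
  classical
  intro v hv
  have hterm : Real.exp (ε * (realDegree H v - D)) + Real.exp (ε * (D - realDegree H v)) ≤
      Real.exp (ε * B) :=
    (Finset.single_le_sum (f := fun v => Real.exp (ε * (realDegree H v - D)) +
      Real.exp (ε * (D - realDegree H v))) (fun v _ => by positivity)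
      (Finset.mem_filter.2 ⟨Finset.mem_univ v, hv⟩)).trans hH
  have hup : realDegree H v - D ≤ B :=
    le_of_mul_le_mul_left (Real.exp_le_exp.1
      (by linarith [Real.exp_pos (ε * (D - realDegree H v))])) hε
  have hlow : D - realDegree H v ≤ B :=
    le_of_mul_le_mul_left (Real.exp_le_exp.1
      (by linarith [Real.exp_pos (ε * (realDegree H v - D))])) hε
  constructor <;> linarith

lemma exists_potential_le_of_iterate {h : ℝ} (hlam : 0 < lam) (hd : 0 ≤ d) (hε0 : 0 ≤ ε)
    (hε : ε ≤ 1 / 100)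
    (hdeg : ∀ v, d ≤ ((G.neighborSet v).ncard : ℝ) ∧ ((G.neighborSet v).ncard : ℝ) ≤ lam * d)
    (hA : ∀ v, ((G.neighborSet v ∩ A).ncard : ℝ) ≤ τ)
    (hτ : 20 * τ ≤ lowerLevel d (Real.log lam)) (hh : 0 ≤ h) (hh200 : 200 * h ≤ 1)
    (hhd : 17 / 2 * h * (lam * d) ≤ 1) (hhV : 8 * h * Fintype.card (V ⊕ Sym2 V) < 1) :
    ∀ k : ℕ, k * h ≤ Real.log lam → ∃ H : G.Subgraph, A ⊆ H.verts ∧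
      potential ε H (upperLevel lam d (k * h)) (lowerLevel d (k * h)) ≤
        Fintype.card V *
          (2 + (lam * d - upperLevel lam d (k * h)) + 9 * (k * h) * Fintype.card V) := by
  intro k
  induction k with
  | zero =>
    intro _
    refine ⟨⊤, Set.subset_univ A, ?_⟩
    simpa [upperLevel_zero, lowerLevel_zero] using
      potential_le_two_mul_card (H := (⊤ : G.Subgraph)) hε0 hdeg
  | succ k ih =>
    intro hk
    have hnext : ((k + 1 : ℕ) : ℝ) * h = k * h + h := by push_cast; ring
    rw [hnext] at hk ⊢
    have hkh : 0 ≤ k * h := by positivity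
    obtain ⟨H, hAH, hH⟩ := ih (by linarith)
    have hLU : lowerLevel d (k * h) ≤ upperLevel lam d (k * h) :=
      lowerLevel_le_upperLevel hlam hd (by linarith)
    have hdrop := upperLevel_sub_le hlam.le hd h (k * h)
    have hU0 : upperLevel lam d (k * h) ≤ lam * d :=
      (antitone_upperLevel hlam.le hd hkh).trans_eq (upperLevel_zero lam d)
    have hdrop1 : upperLevel lam d (k * h) - upperLevel lam d (k * h + h) ≤ 1 :=
      (hdrop.trans (by gcongr)).trans hhd
    obtain ⟨H', hAH', hH'⟩ := exists_potential_le_of_step hε0 hε hh hhV hAH hA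
      (hτ.trans ((antitone_lowerLevel hd (by linarith)).trans hLU)) hLU
      (antitone_upperLevel hlam.le hd (by linarith)) hdrop1 hdrop
      (antitone_lowerLevel hd (by linarith)) (mul_le_lowerLevel_sub hd hh hh200 (k * h))
    exact ⟨H', hAH', by linarith⟩

theorem hasNearlyRegularSubgraph_of_ncard_inter_le {B : ℝ} (hlam : 1 ≤ lam) (hd : 0 ≤ d)
    (hε0 : 0 < ε) (hε : ε ≤ 1 / 100)
    (hdeg : ∀ v, d ≤ ((G.neighborSet v).ncard : ℝ) ∧ ((G.neighborSet v).ncard : ℝ) ≤ lam * d)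
    (hA : ∀ v, ((G.neighborSet v ∩ A).ncard : ℝ) ≤ τ) (hτ : 20 * τ ≤ d / lam ^ 8)
    (hB : Fintype.card V * (2 + lam * d + 9 * Real.log lam * Fintype.card V) ≤
      Real.exp (ε * B)) :
    HasNearlyRegularSubgraph G A (d / lam ^ 8) d B := by
  have hlam0 : 0 < lam := by linarith
  have hlog : 0 ≤ Real.log lam := Real.log_nonneg hlam
  have hlevel := div_pow_le_lowerLevel_log hlam hd
  have hsmall (c : ℝ) : ∀ᶠ T : ℕ in Filter.atTop, c * (Real.log lam / T) < 1 := by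
    have hlim := (tendsto_const_div_atTop_nhds_zero_nat (Real.log lam)).const_mul c
    rw [mul_zero] at hlim
    exact hlim.eventually_lt_const one_pos
  obtain ⟨T, hT200, hTd, hTV, hT⟩ := ((hsmall 200).and ((hsmall (17 / 2 * (lam * d))).and
    ((hsmall (8 * Fintype.card (V ⊕ Sym2 V))).and (Filter.eventually_gt_atTop 0)))).exists
  have htime : T * (Real.log lam / T) = Real.log lam := mul_div_cancel₀ _ (by positivity)
  obtain ⟨H, hAH, hH⟩ := exists_potential_le_of_iterate hlam0 hd hε0.le hε hdeg hA
    (hτ.trans hlevel) (h := Real.log lam / T) (by positivity) hT200.le (by linarith)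
    (by linarith) T htime.le
  rw [htime, upperLevel_log hlam0] at hH
  refine ⟨H, lowerLevel d (Real.log lam), hlevel,
    (antitone_lowerLevel hd hlog).trans_eq (lowerLevel_zero d), hAH,
    isNearlyRegular_of_potential_le hε0 (hH.trans (le_trans ?_ hB))⟩
  gcongr
  have hpos : 0 ≤ d / lam ^ 8 := by positivity
  linarith

end Equalization

section Bernoulli

variable {n : ℕ} {p : ℝ} {E F : Set (Finset (Fin n))}

/-- The probability that a `p`-random subset of `Fin n` equals `S`. -/
noncomputable def bernoulliWeight (n : ℕ) (p : ℝ) (S : Finset (Fin n)) : ℝ :=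
  p ^ S.card * (1 - p) ^ (n - S.card)

lemma bernoulliProb_eq_sum (n : ℕ) (p : ℝ) (E : Set (Finset (Fin n))) :
    bernoulliProb n p E = ∑ S, E.indicator (bernoulliWeight n p) S := rfl

lemma bernoulliWeight_nonneg (hp0 : 0 ≤ p) (hp1 : p ≤ 1) (S : Finset (Fin n)) :
    0 ≤ bernoulliWeight n p S :=
  mul_nonneg (pow_nonneg hp0 _) (pow_nonneg (by linarith) _)

lemma sum_bernoulliWeight_mul_pow (p x : ℝ) (N : Finset (Fin n)) :
    ∑ S, bernoulliWeight n p S * x ^ (N ∩ S).card = (1 + (x - 1) * p) ^ N.card := by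
  have hfactor (i : Fin n) : p * (if i ∈ N then x else 1) + (1 - p) =
      if i ∈ N then 1 + (x - 1) * p else 1 := by
    split_ifs <;> ring
  have hprod : ∏ i, (p * (if i ∈ N then x else 1) + (1 - p)) = (1 + (x - 1) * p) ^ N.card := by
    simp_rw [hfactor]
    rw [Finset.prod_ite_mem, Finset.univ_inter, Finset.prod_const]
  rw [← hprod, Finset.prod_add, Finset.powerset_univ]
  refine Finset.sum_congr rfl fun S _ => ?_
  rw [Finset.prod_mul_distrib, Finset.prod_const, Finset.prod_const, Finset.prod_ite_mem,
    Finset.prod_const, ← Finset.compl_eq_univ_sdiff, Finset.card_compl, Fintype.card_fin,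
    Finset.inter_comm, bernoulliWeight]
  ring

lemma sum_bernoulliWeight (n : ℕ) (p : ℝ) : ∑ S, bernoulliWeight n p S = 1 := by
  simpa using sum_bernoulliWeight_mul_pow (n := n) p 1 ∅

lemma bernoulliProb_univ (n : ℕ) (p : ℝ) : bernoulliProb n p Set.univ = 1 := by
  simp only [bernoulliProb_eq_sum, Set.indicator_univ, sum_bernoulliWeight]

lemma bernoulliProb_mono (hp0 : 0 ≤ p) (hp1 : p ≤ 1) (hEF : E ⊆ F) :
    bernoulliProb n p E ≤ bernoulliProb n p F :=
  Finset.sum_le_sum fun S _ =>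
    Set.indicator_le_indicator_of_subset hEF (bernoulliWeight_nonneg hp0 hp1) S

lemma one_sub_sum_bernoulliProb_compl_le {ι : Type*} [Fintype ι] (hp0 : 0 ≤ p) (hp1 : p ≤ 1)
    (E : ι → Set (Finset (Fin n))) :
    1 - ∑ i, bernoulliProb n p (E i)ᶜ ≤ bernoulliProb n p (⋂ i, E i) := by
  have hw := bernoulliWeight_nonneg (n := n) hp0 hp1
  have hpointwise (S : Finset (Fin n)) : bernoulliWeight n p S ≤
      (⋂ i, E i).indicator (bernoulliWeight n p) S +
        ∑ i, (E i)ᶜ.indicator (bernoulliWeight n p) S := by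
    have hnonneg (i : ι) : 0 ≤ (E i)ᶜ.indicator (bernoulliWeight n p) S :=
      Set.indicator_nonneg (fun S _ => hw S) S
    by_cases hS : S ∈ ⋂ i, E i
    · rw [Set.indicator_of_mem hS]
      exact le_add_of_nonneg_right (Finset.sum_nonneg fun i _ => hnonneg i)
    · obtain ⟨i, hi⟩ : ∃ i, S ∉ E i := by simpa using hS
      rw [Set.indicator_of_notMem hS, zero_add]
      calc bernoulliWeight n p S = (E i)ᶜ.indicator (bernoulliWeight n p) S :=
            (Set.indicator_of_mem (Set.mem_compl hi) _).symm
        _ ≤ ∑ i, (E i)ᶜ.indicator (bernoulliWeight n p) S :=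
            Finset.single_le_sum (fun i _ => hnonneg i) (Finset.mem_univ i)
  have hsum := Finset.sum_le_sum fun S (_ : S ∈ Finset.univ) => hpointwise S
  rw [sum_bernoulliWeight, Finset.sum_add_distrib, Finset.sum_comm] at hsum
  simp only [bernoulliProb_eq_sum]
  linarith

/-- Markov's inequality for the random variable `2 ^ (N ∩ S).ncard`. -/
lemma bernoulliProb_lt_ncard_inter_le (hp0 : 0 ≤ p) (hp1 : p ≤ 1) (N : Set (Fin n)) (τ : ℝ) :
    bernoulliProb n p {S | τ < ((N ∩ S).ncard : ℝ)} ≤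
      Real.exp (p * N.ncard) * (2 : ℝ) ^ (-τ) := by
  classical
  lift N to Finset (Fin n) using N.toFinite
  simp only [← Finset.coe_inter, Set.ncard_coe_finset]
  have hw := bernoulliWeight_nonneg (n := n) hp0 hp1
  have hmarkov (S : Finset (Fin n)) :
      {S : Finset (Fin n) | τ < ((N ∩ S).card : ℝ)}.indicator (bernoulliWeight n p) S ≤
        bernoulliWeight n p S * 2 ^ (N ∩ S).card * (2 : ℝ) ^ (-τ) := by
    refine Set.indicator_apply_le' (fun hS => ?_) fun _ => by have := hw S; positivity
    rw [mul_assoc, ← Real.rpow_natCast, ← Real.rpow_add two_pos]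
    exact le_mul_of_one_le_right (hw S)
      (Real.one_le_rpow one_le_two (by linarith [Set.mem_ofPred.1 hS]))
  calc bernoulliProb n p {S | τ < ((N ∩ S).card : ℝ)}
      ≤ ∑ S, bernoulliWeight n p S * 2 ^ (N ∩ S).card * (2 : ℝ) ^ (-τ) :=
        Finset.sum_le_sum fun S _ => hmarkov S
    _ = (1 + p) ^ N.card * (2 : ℝ) ^ (-τ) := by
        rw [← Finset.sum_mul, sum_bernoulliWeight_mul_pow]
        norm_num
    _ ≤ Real.exp p ^ N.card * (2 : ℝ) ^ (-τ) := by
        gcongr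
        linarith [Real.add_one_le_exp p]
    _ = Real.exp (p * N.card) * (2 : ℝ) ^ (-τ) := by rw [mul_comm p, Real.exp_nat_mul]

lemma mul_exp_mul_two_rpow_le {x y : ℝ} (hx : 1 ≤ x) (hxy : Real.log x ≤ y) :
    x * (Real.exp y * (2 : ℝ) ^ (-(50 * y))) ≤ 1 / x := by
  have hx0 : 0 < x := by linarith
  have hy : 0 ≤ y := (Real.log_nonneg hx).trans hxy
  calc x * (Real.exp y * (2 : ℝ) ^ (-(50 * y)))
      = Real.exp (Real.log x + (y + Real.log 2 * -(50 * y))) := by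
        rw [Real.rpow_def_of_pos two_pos, Real.exp_add, Real.exp_add, Real.exp_log hx0]
    _ ≤ Real.exp (-Real.log x) := by
        refine Real.exp_le_exp.2 ?_
        linarith [mul_le_mul_of_nonneg_right Real.log_two_gt_d9.le hy]
    _ = 1 / x := by rw [Real.exp_neg, Real.exp_log hx0, one_div]

lemma one_sub_inv_le_bernoulliProb_ncard_inter_le {M : ℝ} (hn : 1 ≤ n) (hp0 : 0 ≤ p) (hp1 : p ≤ 1)
    {N : Fin n → Set (Fin n)} (hN : ∀ v, ((N v).ncard : ℝ) ≤ M) (hM : Real.log n ≤ p * M) :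
    1 - 1 / (n : ℝ) ≤ bernoulliProb n p {S | ∀ v, ((N v ∩ S).ncard : ℝ) ≤ 50 * (p * M)} := by
  have htail (v : Fin n) : bernoulliProb n p {S | ((N v ∩ S).ncard : ℝ) ≤ 50 * (p * M)}ᶜ ≤
      Real.exp (p * M) * (2 : ℝ) ^ (-(50 * (p * M))) := by
    simp only [Set.compl_ofPred, not_le]
    refine (bernoulliProb_lt_ncard_inter_le hp0 hp1 (N v) _).trans ?_
    gcongr
    exact hN v
  have hsum := Finset.sum_le_sum fun v (_ : v ∈ Finset.univ) => htail v
  rw [Finset.sum_const, Finset.card_univ, Fintype.card_fin, nsmul_eq_mul] at hsum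
  have hunion := one_sub_sum_bernoulliProb_compl_le hp0 hp1
    fun v => {S : Finset (Fin n) | ((N v ∩ S).ncard : ℝ) ≤ 50 * (p * M)}
  rw [← Set.ofPred_forall] at hunion
  linarith [mul_exp_mul_two_rpow_le (by exact_mod_cast hn) hM]

end Bernoulli

lemma degree_bound_mem_Icc {V : Type*} [Fintype V] [Nonempty V] {G : SimpleGraph V} {lam d : ℝ}
    (hlam : 1 < lam)
    (hG : ∀ v, d ≤ ((G.neighborSet v).ncard : ℝ) ∧ ((G.neighborSet v).ncard : ℝ) ≤ lam * d) :
    d ∈ Set.Icc 0 (Fintype.card V : ℝ) := by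
  obtain ⟨v⟩ := ‹Nonempty V›
  have hcard : realDegree (⊤ : G.Subgraph) v ≤ Fintype.card V := realDegree_le_card _ v
  refine ⟨?_, (hG v).1.trans hcard⟩
  by_contra! hd
  nlinarith [(hG v).1.trans (hG v).2]

/-- A vertex has at most `lam * d / C` neighbours in `A` on average, where `C = 1000 * lam ^ 9`.
Fifty times this is `d / (20 * lam ^ 8)`, the largest number that the deletion process tolerates. -/
lemma one_sub_inv_le_bernoulliProb_hasNearlyRegularSubgraph {n : ℕ} {G : SimpleGraph (Fin n)}
    {lam d B : ℝ} (hlam : 1 ≤ lam) (hn : 1 ≤ n) (hd : 0 ≤ d)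
    (hG : ∀ v, d ≤ ((G.neighborSet v).ncard : ℝ) ∧ ((G.neighborSet v).ncard : ℝ) ≤ lam * d)
    (hlogB : Real.log n ≤ B)
    (hexpB : n * (2 + lam * d + 9 * Real.log lam * n) ≤ Real.exp (1 / 100 * B)) :
    1 - 1 / (n : ℝ) ≤ bernoulliProb n (1 / (1000 * lam ^ 9))
      {A | HasNearlyRegularSubgraph G A (d / (1000 * lam ^ 9)) d B} := by
  set C : ℝ := 1000 * lam ^ 9 with hC
  have hC1 : 1 ≤ C := by linarith [one_le_pow₀ hlam (n := 9)]
  have hp0 : 0 ≤ 1 / C := by positivity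
  have hp1 : 1 / C ≤ 1 := div_le_one_of_le₀ hC1 (by positivity)
  rcases le_total (d / C) B with hsparse | hdense
  · have huniv : {A : Finset (Fin n) | HasNearlyRegularSubgraph G A (d / C) d B} = Set.univ :=
      Set.eq_univ_of_forall fun A => hasNearlyRegularSubgraph_of_le (A : Set (Fin n))
        (by positivity) (div_le_self hd hC1) hsparse
    rw [huniv, bernoulliProb_univ]
    exact sub_le_self 1 (by positivity)
  · have hlog : Real.log n ≤ 1 / C * (lam * d) :=
      calc Real.log n ≤ d / C := hlogB.trans hdense
        _ ≤ lam * d / C := by gcongr; exact le_mul_of_one_le_left hd hlam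
        _ = 1 / C * (lam * d) := by ring
    refine (one_sub_inv_le_bernoulliProb_ncard_inter_le hn hp0 hp1 (fun v => (hG v).2) hlog).trans
      (bernoulliProb_mono hp0 hp1 fun A hA => ?_)
    have hτ : 20 * (50 * (1 / C * (lam * d))) ≤ d / lam ^ 8 := by
      rw [hC]
      field_simp
      norm_num
    have hC8 : lam ^ 8 ≤ C := by
      linarith [pow_le_pow_right₀ hlam (by norm_num : 8 ≤ 9), one_le_pow₀ hlam (n := 9)]
    exact (hasNearlyRegularSubgraph_of_ncard_inter_le hlam hd (by norm_num) le_rfl hG hA hτ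
      (by simpa using hexpB)).mono_left (by gcongr)

lemma mul_log_le_mul_logb {lam x : ℝ} (hlam : 1 ≤ lam) (hx : 1 ≤ x) :
    1000 * Real.log x ≤ 10 ^ 5 * lam ^ 5 * Real.logb 2 x := by
  have hlogb : Real.log x ≤ Real.logb 2 x := by
    rw [Real.logb, le_div_iff₀ (Real.log_pos one_lt_two)]
    exact mul_le_of_le_one_right (Real.log_nonneg hx) (by linarith [Real.log_two_lt_d9])
  have hlogb0 := (Real.log_nonneg hx).trans hlogb
  have hlam5 := le_mul_of_one_le_left hlogb0 (one_le_pow₀ hlam (n := 5))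
  linarith

lemma mul_le_exp_logb {lam d x : ℝ} (hlam : 1 ≤ lam) (hdx : d ≤ x)
    (hx : 2 + lam + 9 * Real.log lam ≤ x) :
    x * (2 + lam * d + 9 * Real.log lam * x) ≤
      Real.exp (1 / 100 * (10 ^ 5 * lam ^ 5 * Real.logb 2 x)) := by
  have hx1 : 1 ≤ x := by linarith [Real.log_nonneg hlam]
  calc x * (2 + lam * d + 9 * Real.log lam * x)
      ≤ x * (2 * x + lam * x + 9 * Real.log lam * x) := by
        gcongr
        linarith
    _ = x ^ 2 * (2 + lam + 9 * Real.log lam) := by ring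
    _ ≤ x ^ 2 * x := by gcongr
    _ = Real.exp (3 * Real.log x) := by
        rw [mul_comm (3 : ℝ), ← Real.rpow_def_of_pos (by linarith)]
        exact_mod_cast (pow_succ x 2).symm
    _ ≤ Real.exp (1 / 100 * (10 ^ 5 * lam ^ 5 * Real.logb 2 x)) := by
        refine Real.exp_le_exp.2 ?_
        linarith [mul_log_le_mul_logb hlam hx1, Real.log_nonneg hx1]

/-- For every `λ > 1` there is some `C ≥ 1` such that: if every vertex of an `n`-vertex
graph `G` has degree between `d` and `λd`, and `A` is a `(1/C)`-random subset of `V(G)`,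
then with probability `1 - o(1)`, `G` contains a `(d' ± 10^5·λ^5·log n)`-nearly-regular
subgraph `H` with `d/C ≤ d' ≤ d` and `A ⊆ V(H)`. -/
theorem statement1 (lam : ℝ) (hlam : 1 < lam) :
    ∃ C : ℝ, 1 ≤ C ∧
      ∀ δ : ℝ, 0 < δ → ∃ N : ℕ, ∀ n : ℕ, N ≤ n →
        ∀ (G : SimpleGraph (Fin n)) (d : ℝ),
          (∀ v, d ≤ ((G.neighborSet v).ncard : ℝ) ∧
            ((G.neighborSet v).ncard : ℝ) ≤ lam * d) →
          1 - δ ≤ bernoulliProb n (1 / C)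
            {A : Finset (Fin n) | ∃ (H : G.Subgraph) (d' : ℝ),
              d / C ≤ d' ∧ d' ≤ d ∧ (↑A : Set (Fin n)) ⊆ H.verts ∧
              ∀ v ∈ H.verts,
                d' - 10 ^ 5 * lam ^ 5 * Real.logb 2 n ≤ ((H.neighborSet v).ncard : ℝ) ∧
                ((H.neighborSet v).ncard : ℝ) ≤ d' + 10 ^ 5 * lam ^ 5 * Real.logb 2 n} := by
  refine ⟨1000 * lam ^ 9, by linarith [one_le_pow₀ hlam.le (n := 9)], fun δ hδ => ?_⟩
  obtain ⟨N, hN⟩ := exists_nat_ge (2 + lam + 9 * Real.log lam + 1 / δ)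
  refine ⟨N, fun n hNn G d hG => ?_⟩
  have hn : 2 + lam + 9 * Real.log lam + 1 / δ ≤ n := hN.trans (mod_cast hNn)
  have hlog : 0 < Real.log lam := Real.log_pos hlam
  have hδ' : 0 < 1 / δ := by positivity
  have hn1 : 1 ≤ (n : ℝ) := by linarith
  have hn1' : 1 ≤ n := mod_cast hn1
  have : Nonempty (Fin n) := Fin.pos_iff_nonempty.1 hn1'
  obtain ⟨hd0, hdn⟩ := degree_bound_mem_Icc hlam hG
  rw [Fintype.card_fin] at hdn
  calc 1 - δ ≤ 1 - 1 / (n : ℝ) :=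
        sub_le_sub_left ((one_div_le (by positivity) hδ).2 (by linarith)) 1
    _ ≤ _ := one_sub_inv_le_bernoulliProb_hasNearlyRegularSubgraph hlam.le hn1' hd0 hG
        (by linarith [mul_log_le_mul_logb hlam.le hn1, Real.log_nonneg hn1])
        (mul_le_exp_logb hlam.le hdn (by linarith))
end

section
/- For every sufficiently large m, there exists a bipartite graph H with an odd number of edges, with maximum degree at most 102, and with vertex classes A_1 ∪ A_2 and B_1 ∪ B_2, where |A_1| = |B_1| = 2m and |A_2| = |B_2| = 5m, such that the following holds: for every A'_1 ⊆ A_1 and B'_1 ⊆ B_1 with |A'_1| = |B'_1| ≥ m, there is a perfect matching in H between A'_1 ∪ A_2 and B'_1 ∪ B_2. -/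
/-!
Nineteen random two-to-one functions from `L` to `R`, read off from random permutations of
`R × {0, 1}`, expand all small subsets of `L` by a union bound. Overlay the graphs of such functions
from `A₁ ∪ A₂` into `B₂` and from `B₁ ∪ B₂` into `A₂`. Whichever `A₁'` and `B₁'` are chosen, small
sets expand on both sides, and this already gives Hall's condition for every `S ⊆ A₁' ∪ A₂`: if `S`
is large, the vertices of `B₁' ∪ B₂` without a neighbor in `S` form a small set, which expands into
the complement of `S`. No edge joins `A₁` to `B₁`, so adding one adjusts the parity of the number
of edges.
-/

open Finset

section Permutations

variable {α : Type*} [Fintype α] [DecidableEq α]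

/-- Double counting of the pairs `(π, y)` with `π` mapping `S` into `T`, `y ∉ S` and `π y ∈ T`:
composing with the transposition of `x` and `y` shows that every `y` occurs equally often. -/
theorem card_perm_mapsTo_insert {S : Finset α} {x : α} (hx : x ∉ S) (T : Finset α) :
    #{π : Equiv.Perm α | ∀ y ∈ insert x S, π y ∈ T} * (Fintype.card α - #S) =
      #{π : Equiv.Perm α | ∀ y ∈ S, π y ∈ T} * (#T - #S) := by
  let P : Finset (Equiv.Perm α) := {π | ∀ y ∈ S, π y ∈ T}
  have card_above (y : α) (hy : y ∈ Sᶜ) :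
      #{π ∈ P | π y ∈ T} = #{π : Equiv.Perm α | ∀ z ∈ insert x S, π z ∈ T} := by
    refine card_equiv (Equiv.mulRight (Equiv.swap x y)) fun π => ?_
    have swap_fixes : ∀ z ∈ S, Equiv.swap x y z = z := fun z hz =>
      Equiv.swap_apply_of_ne_of_ne (ne_of_mem_of_not_mem hz hx)
        (ne_of_mem_of_not_mem hz (mem_compl.1 hy))
    simp +contextual [P, swap_fixes, and_comm]
  have card_below (π : Equiv.Perm α) (hπ : π ∈ P) : #{y ∈ Sᶜ | π y ∈ T} = #T - #S := by
    have preimage_eq : {y ∈ Sᶜ | π y ∈ T} = T.map π.symm.toEmbedding \ S := by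
      ext y
      simp [and_comm]
    rw [preimage_eq, card_sdiff_of_subset, card_map]
    intro y hy
    simpa using (mem_filter.1 hπ).2 y hy
  calc _ = ∑ y ∈ Sᶜ, #{π ∈ P | π y ∈ T} := by
        rw [sum_congr rfl card_above, sum_const, card_compl, smul_eq_mul, mul_comm]
    _ = ∑ π ∈ P, #{y ∈ Sᶜ | π y ∈ T} :=
        sum_card_bipartiteAbove_eq_sum_card_bipartiteBelow fun y (π : Equiv.Perm α) => π y ∈ T
    _ = _ := by rw [sum_congr rfl card_below, sum_const, smul_eq_mul]

theorem dens_perm_mapsTo_le (S T : Finset α) :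
    ({π : Equiv.Perm α | ∀ x ∈ S, π x ∈ T} : Finset (Equiv.Perm α)).dens ≤ T.dens ^ #S := by
  induction S using Finset.induction_on with
  | empty => simp
  | insert x S hx ih =>
    set Q : Finset (Equiv.Perm α) := {π | ∀ y ∈ insert x S, π y ∈ T}
    set P : Finset (Equiv.Perm α) := {π | ∀ y ∈ S, π y ∈ T}
    have hS : 0 < Fintype.card α - #S := Nat.sub_pos_of_lt (card_lt_univ_of_notMem hx)
    have ratio_le : (#T - #S) * Fintype.card α ≤ #T * (Fintype.card α - #S) := by
      rw [Nat.sub_mul, Nat.mul_sub, Nat.mul_comm #T #S]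
      gcongr
      exact card_le_univ T
    have card_le : #Q * Fintype.card α ≤ #P * #T := by
      refine Nat.le_of_mul_le_mul_right ?_ hS
      calc #Q * Fintype.card α * (Fintype.card α - #S)
          = #P * ((#T - #S) * Fintype.card α) := by
            rw [mul_right_comm, card_perm_mapsTo_insert hx, mul_assoc]
        _ ≤ #P * (#T * (Fintype.card α - #S)) := by gcongr
        _ = _ := (mul_assoc ..).symm
    have dens_le : Q.dens ≤ P.dens * T.dens := by
      have : (0 : ℚ≥0) < Fintype.card α := by
        exact_mod_cast Fintype.card_pos_iff.2 ⟨x⟩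
      simp only [dens_eq_card_div_card]
      rw [div_mul_div_comm, mul_comm (Fintype.card (Equiv.Perm α) : ℚ≥0), ← div_div]
      gcongr
      rw [le_div_iff₀ this]
      exact_mod_cast card_le
    rw [card_insert_of_notMem hx, pow_succ]
    exact dens_le.trans (by gcongr)

end Permutations

theorem dens_product {β γ : Type*} [Fintype β] [Fintype γ] (S : Finset β) (T : Finset γ) :
    (S ×ˢ T).dens = S.dens * T.dens := by
  simp [dens_eq_card_div_card, div_mul_div_comm]

theorem dens_piFinset_const {ι α : Type*} [Fintype ι] [DecidableEq ι] [Fintype α] (S : Finset α) :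
    (Fintype.piFinset fun _ : ι => S).dens = S.dens ^ Fintype.card ι := by
  simp [dens_eq_card_div_card, div_pow]

theorem pow_self_le_three_pow_mul_factorial (s : ℕ) : s ^ s ≤ 3 ^ s * s.factorial := by
  have exp_le : Real.exp s ≤ 3 ^ s := by
    rw [← mul_one (s : ℝ), Real.exp_nat_mul]
    gcongr
    exact Real.exp_one_lt_three.le
  have := (Real.pow_div_factorial_le_exp (s : ℝ) s.cast_nonneg s).trans exp_le
  rw [div_le_iff₀ (by positivity)] at this
  exact_mod_cast this

theorem choose_mul_pow_self_le (n s : ℕ) : n.choose s * s ^ s ≤ (3 * n) ^ s :=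
  calc n.choose s * s ^ s ≤ n.choose s * (3 ^ s * s.factorial) := by
        gcongr
        exact pow_self_le_three_pow_mul_factorial s
    _ = 3 ^ s * n.descFactorial s := by rw [Nat.descFactorial_eq_factorial_mul_choose]; ring
    _ ≤ 3 ^ s * n ^ s := by gcongr; exact Nat.descFactorial_le_pow n s
    _ = (3 * n) ^ s := (mul_pow ..).symm

theorem choose_mul_div_pow_le (c n s : ℕ) :
    ((c * n).choose s : ℚ≥0) * (s / n) ^ s ≤ (3 * c) ^ s := by
  rw [div_pow, ← mul_div_assoc]
  refine div_le_of_le_mul₀ zero_le zero_le ?_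
  rw [← mul_pow, mul_assoc]
  exact_mod_cast choose_mul_pow_self_le (c * n) s

theorem choose_mul_choose_mul_div_pow_le {n s : ℕ} (hs : 5 * s ≤ 4 * n) :
    ((2 * n).choose s : ℚ≥0) * n.choose s * (s / n) ^ (s * 19) ≤ (1 / 2) ^ s := by
  have hsn : (s / n : ℚ≥0) ≤ 4 / 5 := by
    refine div_le_of_le_mul₀ zero_le zero_le ?_
    rw [div_mul_eq_mul_div, le_div_iff₀ (by norm_num), mul_comm]
    exact_mod_cast hs
  have two_mul_bound := choose_mul_div_pow_le 2 n s
  have one_mul_bound := choose_mul_div_pow_le 1 n s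
  rw [one_mul] at one_mul_bound
  -- Two of the powers absorb the binomials; `17` is least with `18 * (4 / 5) ^ 17 ≤ 1 / 2`.
  calc _ = ((2 * n).choose s * (s / n) ^ s) * (n.choose s * (s / n) ^ s) *
          ((s / n : ℚ≥0) ^ 17) ^ s := by ring
    _ ≤ (3 * (2 : ℕ)) ^ s * (3 * (1 : ℕ)) ^ s * ((4 / 5) ^ 17) ^ s := by gcongr
    _ = (18 * (4 / 5) ^ 17) ^ s := by rw [← mul_pow, ← mul_pow]; norm_num
    _ ≤ (1 / 2) ^ s := by
        gcongr
        exact_mod_cast (by norm_num : (18 * (4 / 5) ^ 17 : ℚ) ≤ 1 / 2)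

theorem sum_Icc_one_half_pow_lt_one (t : ℕ) : ∑ s ∈ Icc 1 t, (1 / 2 : ℚ≥0) ^ s < 1 := by
  have key : ∑ s ∈ Icc 1 t, (1 / 2 : ℚ≥0) ^ s + (1 / 2) ^ t = 1 := by
    induction t with
    | zero => simp
    | succ t ih =>
      have halves : (1 / 2 : ℚ≥0) ^ (t + 1) + (1 / 2) ^ (t + 1) = (1 / 2) ^ t := by ring
      rw [sum_Icc_succ_top (by omega), add_assoc, halves, ih]
  have : (0 : ℚ≥0) < (1 / 2) ^ t := by positivity
  exact (lt_add_of_pos_right _ this).trans_eq key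

section RandomFunctions

variable {β γ ι : Type*} [Fintype β] [DecidableEq β] [Fintype γ] [Nonempty γ] [Fintype ι]

theorem dens_perms_mapsTo_fst_le [DecidableEq γ] [DecidableEq ι] (S : Finset (β × γ))
    (T : Finset β) :
    ({ω | ∀ i, ∀ x ∈ S, (ω i x).1 ∈ T} : Finset (ι → Equiv.Perm (β × γ))).dens ≤
      T.dens ^ (#S * Fintype.card ι) := by
  have eq_piFinset : ({ω | ∀ i, ∀ x ∈ S, (ω i x).1 ∈ T} : Finset (ι → Equiv.Perm (β × γ))) =
      Fintype.piFinset fun _ => {π | ∀ x ∈ S, π x ∈ T ×ˢ univ} := by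
    ext ω
    simp
  have single_le := dens_perm_mapsTo_le S (T ×ˢ (univ : Finset γ))
  rw [dens_product, dens_univ, mul_one] at single_le
  rw [eq_piFinset, dens_piFinset_const, pow_mul]
  gcongr

theorem exists_perms_card_le_card_image₂_fst {t : ℕ} (ht : t ≤ Fintype.card β)
    (hsum : ∑ s ∈ Icc 1 t, ((Fintype.card γ * Fintype.card β).choose s : ℚ≥0) *
      (Fintype.card β).choose s * (s / Fintype.card β) ^ (s * Fintype.card ι) < 1) :
    ∃ ω : ι → Equiv.Perm (β × γ), ∀ S, #S ≤ t → #S ≤ #(image₂ (fun i x => (ω i x).1) univ S) := by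
  classical
  by_contra! hbad
  let pairs (s : ℕ) : Finset (Finset (β × γ) × Finset β) :=
    powersetCard s univ ×ˢ powersetCard s univ
  let trapped (p : Finset (β × γ) × Finset β) : Finset (ι → Equiv.Perm (β × γ)) :=
    {ω | ∀ i, ∀ x ∈ p.1, (ω i x).1 ∈ p.2}
  have univ_eq : univ = (Icc 1 t).biUnion fun s => (pairs s).biUnion trapped := by
    refine (eq_univ_iff_forall.2 fun ω => ?_).symm
    obtain ⟨S, hS, hlt⟩ := hbad ω
    obtain ⟨T, himage, hT⟩ := exists_superset_card_eq hlt.le (hS.trans ht)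
    simp only [mem_biUnion, mem_Icc]
    refine ⟨#S, ⟨Nat.one_le_of_lt hlt, hS⟩, (S, T), by simp [pairs, hT], ?_⟩
    simpa [trapped] using fun i x => (image₂_subset_iff.1 himage i (mem_univ i) x)
  have trapped_le (s : ℕ) : ∀ p ∈ pairs s,
      (trapped p).dens ≤ (s / Fintype.card β : ℚ≥0) ^ (s * Fintype.card ι) := by
    intro p hp
    obtain ⟨hS, hT⟩ := mem_product.1 hp
    rw [mem_powersetCard_univ] at hS hT
    simpa only [dens_eq_card_div_card, hS, hT] using dens_perms_mapsTo_fst_le (ι := ι) p.1 p.2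
  have card_pairs (s : ℕ) : (#(pairs s) : ℚ≥0) =
      (Fintype.card γ * Fintype.card β).choose s * (Fintype.card β).choose s := by
    simp [pairs, mul_comm]
  refine hsum.not_ge ?_
  calc 1 = (univ : Finset (ι → Equiv.Perm (β × γ))).dens := dens_univ.symm
    _ ≤ ∑ s ∈ Icc 1 t, ((pairs s).biUnion trapped).dens := univ_eq ▸ dens_biUnion_le
    _ ≤ ∑ s ∈ Icc 1 t, #(pairs s) • (s / Fintype.card β : ℚ≥0) ^ (s * Fintype.card ι) :=
        sum_le_sum fun s _ => dens_biUnion_le.trans (sum_le_card_nsmul _ _ _ (trapped_le s))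
    _ = _ := by simp only [nsmul_eq_mul, card_pairs]

end RandomFunctions

theorem exists_functions_card_le_card_image₂ {L R : Type*} [Fintype L] [Fintype R]
    [DecidableEq R] (hLR : Fintype.card L ≤ 2 * Fintype.card R) {t : ℕ}
    (ht : 5 * t ≤ 4 * Fintype.card R) :
    ∃ f : Fin 19 → L → R, (∀ i y, #{x | f i x = y} ≤ 2) ∧
      ∀ S, #S ≤ t → #S ≤ #(image₂ f univ S) := by
  obtain ⟨g⟩ : Nonempty (L ↪ R × Fin 2) :=
    Function.Embedding.nonempty_of_card_le (by simpa [mul_comm] using hLR)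
  have sum_lt_one : ∑ s ∈ Icc 1 t, ((Fintype.card (Fin 2) * Fintype.card R).choose s : ℚ≥0) *
      (Fintype.card R).choose s * (s / Fintype.card R) ^ (s * Fintype.card (Fin 19)) < 1 := by
    simp only [Fintype.card_fin]
    refine lt_of_le_of_lt (sum_le_sum fun s hs => ?_) (sum_Icc_one_half_pow_lt_one t)
    exact choose_mul_choose_mul_div_pow_le (by grind)
  obtain ⟨ω, hω⟩ := exists_perms_card_le_card_image₂_fst (by omega) sum_lt_one
  refine ⟨fun i x => (ω i (g x)).1, fun i y => ?_, fun S hS => ?_⟩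
  · refine (card_le_card_of_injOn (t := univ) (fun x => (ω i (g x)).2) (by simp) ?_).trans_eq
      (card_fin 2)
    intro x hx x' hx' h
    rw [mem_coe, mem_filter_univ] at hx hx'
    exact g.injective ((ω i).injective (Prod.ext (hx.trans hx'.symm) h))
  · have := hω (S.image g) (card_image_le.trans hS)
    rwa [image₂_image_right, card_image_of_injective S g.injective] at this

section FunctionGraph

variable {V : Type*} {ι : Type*} {L R : Set V}

/-- The graph on `V` joining each `x ∈ L` to its images `f i x ∈ R` under a family of functions
`f i : L → R`. -/
def functionGraph (f : ι → L → R) : SimpleGraph V :=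
  SimpleGraph.fromRel fun x y => ∃ (a : L) (i : ι), (a : V) = x ∧ (f i a : V) = y

theorem functionGraph_isBipartiteWith (h : Disjoint L R) (f : ι → L → R) :
    (functionGraph f).IsBipartiteWith L R where
  disjoint := h
  mem_of_adj := by
    rintro u v ⟨-, ⟨a, i, rfl, rfl⟩ | ⟨a, i, rfl, rfl⟩⟩
    · exact Or.inl ⟨a.2, (f i a).2⟩
    · exact Or.inr ⟨(f i a).2, a.2⟩

theorem functionGraph_adj (h : Disjoint L R) (f : ι → L → R) (i : ι) (a : L) :
    (functionGraph f).Adj a (f i a) :=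
  ⟨h.ne_of_mem a.2 (f i a).2, Or.inl ⟨a, i, rfl, rfl⟩⟩

theorem functionGraph_ncard_neighborSet_le_of_notMem_right [Fintype ι] (f : ι → L → R) {v : V}
    (hv : v ∉ R) : ((functionGraph f).neighborSet v).ncard ≤ Fintype.card ι := by
  by_cases hL : v ∈ L
  · have subset_range : (functionGraph f).neighborSet v ⊆ Set.range fun i => (f i ⟨v, hL⟩ : V) := by
      rintro u ⟨-, ⟨a, i, rfl, rfl⟩ | ⟨a, i, rfl, rfl⟩⟩
      · exact ⟨i, rfl⟩
      · exact (hv (f i a).2).elim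
    refine (Set.ncard_le_ncard subset_range (Set.finite_range _)).trans ?_
    rw [← Nat.card_eq_fintype_card]
    exact Finite.card_range_le _
  · have empty : (functionGraph f).neighborSet v = ∅ := by
      refine Set.eq_empty_iff_forall_notMem.2 ?_
      rintro u ⟨-, ⟨a, i, rfl, rfl⟩ | ⟨a, i, rfl, rfl⟩⟩
      · exact hL a.2
      · exact hv (f i a).2
    simp [empty]

theorem functionGraph_ncard_neighborSet_le_of_notMem_left [Finite V] [Fintype ι]
    {f : ι → L → R} {c : ℕ} (hf : ∀ i y, {x | f i x = y}.ncard ≤ c) {v : V} (hv : v ∉ L) :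
    ((functionGraph f).neighborSet v).ncard ≤ Fintype.card ι * c := by
  have subset_fibers : (functionGraph f).neighborSet v ⊆
      ⋃ i, ((↑) : L → V) '' {x | (f i x : V) = v} := by
    rintro u ⟨-, ⟨a, i, rfl, rfl⟩ | ⟨a, i, rfl, rfl⟩⟩
    · exact (hv a.2).elim
    · exact Set.mem_iUnion.2 ⟨i, a, rfl, rfl⟩
  have fiber_le (i : ι) : (((↑) : L → V) '' {x | (f i x : V) = v}).ncard ≤ c := by
    rw [Set.ncard_image_of_injective _ Subtype.val_injective]
    by_cases hR : v ∈ R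
    · simpa [Subtype.ext_iff] using hf i ⟨v, hR⟩
    · have empty : {x | (f i x : V) = v} = ∅ :=
        Set.eq_empty_iff_forall_notMem.2 fun x hx => hR (hx ▸ (f i x).2)
      simp [empty]
  calc _ ≤ _ := Set.ncard_le_ncard subset_fibers
    _ ≤ ∑ i, (((↑) : L → V) '' {x | (f i x : V) = v}).ncard := Set.ncard_iUnion_le_of_fintype _
    _ ≤ ∑ _i : ι, c := sum_le_sum fun i _ => fiber_le i
    _ = Fintype.card ι * c := by simp

end FunctionGraph

section Expansion

variable {V : Type*} [Finite V] {G H : SimpleGraph V} {A A' B B' : Set V} {t : ℕ}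

/-- Every subset of `A` with at most `t` elements has at least as many neighbors in `B` as it has
elements: Hall's condition from `A` to `B`, for small sets only. -/
def ExpandsInto (G : SimpleGraph V) (A B : Set V) (t : ℕ) : Prop :=
  ∀ S ⊆ A, S.ncard ≤ t → S.ncard ≤ (B ∩ ⋃ x ∈ S, G.neighborSet x).ncard

theorem ExpandsInto.mono (h : ExpandsInto G A B t) (hG : G ≤ H) (hA : A' ⊆ A) (hB : B ⊆ B') :
    ExpandsInto H A' B' t := fun S hS hSt =>
  (h S (hS.trans hA) hSt).trans <| Set.ncard_le_ncard <|
    Set.inter_subset_inter hB <| Set.iUnion₂_mono fun _ _ _ hy => hG hy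

theorem functionGraph_expandsInto (hAB : Disjoint A B) {ι : Type*} [Fintype ι]
    [DecidableEq B] {f : ι → A → B} (hf : ∀ S, #S ≤ t → #S ≤ #(image₂ f univ S)) :
    ExpandsInto (functionGraph f) A B t := by
  intro S hSA hSt
  obtain ⟨S', rfl⟩ : ∃ S' : Finset A, ((↑) : A → V) '' S' = S :=
    ⟨(Set.toFinite (((↑) : A → V) ⁻¹' S)).toFinset, by simpa using hSA⟩
  rw [Set.ncard_image_of_injective _ Subtype.val_injective, Set.ncard_coe_finset] at hSt ⊢
  calc #S' ≤ #(image₂ f univ S') := hf S' hSt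
    _ = (((↑) : B → V) '' image₂ f univ S').ncard := by
      rw [Set.ncard_image_of_injective _ Subtype.val_injective, Set.ncard_coe_finset]
    _ ≤ _ := Set.ncard_le_ncard ?_
  rintro _ ⟨y, hy, rfl⟩
  obtain ⟨i, -, x, hx, rfl⟩ := mem_image₂.1 hy
  refine ⟨(f i x).2, Set.mem_biUnion (Set.mem_image_of_mem _ hx) ?_⟩
  exact functionGraph_adj hAB f i x

theorem exists_isBipartiteWith_expandsInto (hAB : Disjoint A B) (hcard : A.ncard ≤ 2 * B.ncard)
    (ht : 5 * t ≤ 4 * B.ncard) :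
    ∃ G : SimpleGraph V, G.IsBipartiteWith A B ∧ ExpandsInto G A B t ∧
      (∀ v ∉ B, (G.neighborSet v).ncard ≤ 19) ∧ ∀ v ∉ A, (G.neighborSet v).ncard ≤ 38 := by
  classical
  have := Fintype.ofFinite V
  rw [← Nat.card_coe_set_eq, Nat.card_eq_fintype_card] at hcard ht
  rw [← Nat.card_coe_set_eq, Nat.card_eq_fintype_card] at hcard
  obtain ⟨f, hfiber, hexpand⟩ := exists_functions_card_le_card_image₂ hcard ht
  refine ⟨functionGraph f, functionGraph_isBipartiteWith hAB f,
    functionGraph_expandsInto hAB hexpand, fun v hv => ?_, fun v hv => ?_⟩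
  · exact functionGraph_ncard_neighborSet_le_of_notMem_right f hv
  · refine functionGraph_ncard_neighborSet_le_of_notMem_left (c := 2) (fun i y => ?_) hv
    simpa [← Set.ncard_coe_finset] using hfiber i y

theorem ExpandsInto.ncard_le_of_subset (hAB : ExpandsInto G A B t) (hBA : ExpandsInto G B A t)
    (hcard : A.ncard = B.ncard) (ht : A.ncard ≤ 2 * t) {S : Set V} (hS : S ⊆ A) :
    S.ncard ≤ (B ∩ ⋃ x ∈ S, G.neighborSet x).ncard := by
  set N := B ∩ ⋃ x ∈ S, G.neighborSet x
  rcases le_total S.ncard t with hSt | hSt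
  · exact hAB S hS hSt
  have ncard_N : t ≤ N.ncard := by
    obtain ⟨S₀, hS₀, rfl⟩ := Set.exists_subset_card_eq hSt
    exact (hAB S₀ (hS₀.trans hS) le_rfl).trans <| Set.ncard_le_ncard <|
      Set.inter_subset_inter_right B (Set.biUnion_subset_biUnion_left hS₀)
  have neighbors_sdiff : A ∩ ⋃ y ∈ B \ N, G.neighborSet y ⊆ A \ S := by
    rintro x ⟨hxA, hx⟩
    obtain ⟨y, ⟨hyB, hyN⟩, hyx⟩ := Set.mem_iUnion₂.1 hx
    exact ⟨hxA, fun hxS => hyN ⟨hyB, Set.mem_biUnion hxS (SimpleGraph.Adj.symm hyx)⟩⟩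
  have ncard_sdiff_N : (B \ N).ncard = B.ncard - N.ncard :=
    Set.ncard_sdiff Set.inter_subset_left
  have ncard_sdiff_S : (A \ S).ncard = A.ncard - S.ncard := Set.ncard_sdiff hS
  have ncard_sdiff_le := (hBA (B \ N) Set.sdiff_subset (by omega)).trans
    (Set.ncard_le_ncard neighbors_sdiff)
  have := Set.ncard_le_ncard hS
  omega

theorem verts_eq_union_of_isMatching (hG : G.IsBipartiteWith A B) (hcard : A.ncard = B.ncard)
    {M : G.Subgraph} (hM : M.IsMatching) (hA : A ⊆ M.verts) : M.verts = A ∪ B := by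
  choose! partner hpartner using fun a (ha : a ∈ A) => (hM (hA ha)).exists
  have mapsTo : Set.MapsTo partner A B := fun a ha =>
    SimpleGraph.isBipartiteWith_neighborSet_subset hG ha (hpartner a ha).adj_sub
  have injOn : Set.InjOn partner A := fun a ha a' ha' h =>
    hM.eq_of_adj_right (hpartner a ha) (h ▸ hpartner a' ha')
  have image_eq : partner '' A = B :=
    Set.eq_of_subset_of_ncard_le mapsTo.image_subset
      (by rw [injOn.ncard_image, hcard])
  refine subset_antisymm (fun v hv => ?_) (Set.union_subset hA ?_)
  · obtain ⟨w, hvw, -⟩ := hM hv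
    exact (hG.mem_of_adj hvw.adj_sub).imp And.left And.left
  · rw [← image_eq]
    rintro _ ⟨a, ha, rfl⟩
    exact (hpartner a ha).snd_mem

theorem exists_isMatching_of_expandsInto (hdis : Disjoint A B) (hcard : A.ncard = B.ncard)
    (ht : A.ncard ≤ 2 * t) (hAB : ExpandsInto G A B t) (hBA : ExpandsInto G B A t) :
    ∃ M : G.Subgraph, M.IsMatching ∧ M.verts = A ∪ B ∧
      ∀ u v, M.Adj u v → u ∈ A ∧ v ∈ B ∨ u ∈ B ∧ v ∈ A := by
  classical
  have := Fintype.ofFinite V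
  have hbip : (G.between A B).IsBipartiteWith A B := SimpleGraph.between_isBipartiteWith hdis
  have hall : ∀ S ⊆ A, S.ncard ≤ (⋃ x ∈ S, (G.between A B).neighborSet x).ncard := by
    intro S hS
    refine (hAB.ncard_le_of_subset hBA hcard ht hS).trans (Set.ncard_le_ncard ?_)
    rintro y ⟨hyB, hy⟩
    obtain ⟨x, hx, hxy⟩ := Set.mem_iUnion₂.1 hy
    exact Set.mem_biUnion hx ⟨hxy, Or.inl ⟨hS hx, hyB⟩⟩
  obtain ⟨M, hA, hM⟩ := SimpleGraph.exists_isMatching_of_forall_ncard_le hbip hall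
  refine ⟨M.map (.ofLE SimpleGraph.between_le), hM.map_ofLE _, ?_, fun u v huv => ?_⟩
  · simpa using verts_eq_union_of_isMatching hbip hcard hM hA
  · have : M.Adj u v := by simpa using huv
    exact hbip.mem_of_adj this.adj_sub

end Expansion

section OddEdges

variable {V : Type*} {G H : SimpleGraph V} {a b : V}

theorem ncard_neighborSet_le_add_one_of_le_sup_edge [Finite V] (hH : H ≤ G ⊔ .edge a b) (v : V) :
    (H.neighborSet v).ncard ≤ (G.neighborSet v).ncard + 1 := by
  have edge_le : ((SimpleGraph.edge a b).neighborSet v).ncard ≤ 1 := by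
    refine (Set.ncard_le_one_iff (Set.toFinite _)).2 fun {x y} hx hy => ?_
    simp only [SimpleGraph.mem_neighborSet, SimpleGraph.edge_adj] at hx hy
    grind
  calc (H.neighborSet v).ncard ≤ ((G ⊔ .edge a b).neighborSet v).ncard :=
        Set.ncard_le_ncard fun _ hu => hH hu
    _ ≤ _ := by
      rw [SimpleGraph.neighborSet_sup]
      exact (Set.ncard_union_le _ _).trans (by gcongr)

theorem exists_odd_ncard_edgeSet [Finite V] (hab : a ≠ b) (hadj : ¬ G.Adj a b) :
    ∃ H, G ≤ H ∧ H ≤ G ⊔ .edge a b ∧ Odd H.edgeSet.ncard := by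
  rcases Nat.even_or_odd G.edgeSet.ncard with heven | hodd
  · refine ⟨G ⊔ .edge a b, le_sup_left, le_rfl, ?_⟩
    rw [SimpleGraph.edgeSet_sup, SimpleGraph.edgeSet_edge_of_ne hab, Set.union_singleton,
      Set.ncard_insert_of_notMem (by simpa using hadj)]
    exact heven.add_one
  · exact ⟨G, le_rfl, le_sup_left, hodd⟩

end OddEdges

theorem exists_pairwise_disjoint_ncard {ι V : Type*} [Fintype ι] [Finite V] (n : ι → ℕ)
    (hn : ∑ i, n i ≤ Nat.card V) :
    ∃ A : ι → Set V, Pairwise (Function.onFun Disjoint A) ∧ ∀ i, (A i).ncard = n i := by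
  have := Fintype.ofFinite V
  obtain ⟨e⟩ : Nonempty ((Σ i, Fin (n i)) ↪ V) :=
    Function.Embedding.nonempty_of_card_le (by simpa using hn)
  refine ⟨fun i => Set.range fun j => e ⟨i, j⟩, fun i i' hi => ?_, fun i => ?_⟩
  · rw [Function.onFun, Set.disjoint_left]
    rintro _ ⟨j, rfl⟩ ⟨j', h⟩
    exact hi (congrArg Sigma.fst (e.injective h)).symm
  · have injective : Function.Injective fun j : Fin (n i) => e ⟨i, j⟩ :=
      e.injective.comp sigma_mk_injective
    rw [← Nat.card_coe_set_eq, Nat.card_range_of_injective injective, Nat.card_fin]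

theorem exists_isBipartiteWith_expandsInto_both {V : Type*} [Finite V] {A A₂ B B₂ : Set V} {t : ℕ}
    (hAB : Disjoint A B) (hA₂ : A₂ ⊆ A) (hB₂ : B₂ ⊆ B) (hA : A.ncard ≤ 2 * B₂.ncard)
    (hB : B.ncard ≤ 2 * A₂.ncard) (htA : 5 * t ≤ 4 * A₂.ncard) (htB : 5 * t ≤ 4 * B₂.ncard) :
    ∃ G : SimpleGraph V, G.IsBipartiteWith A B ∧ ExpandsInto G A B₂ t ∧ ExpandsInto G B A₂ t ∧
      (∀ v, (G.neighborSet v).ncard ≤ 57) ∧ ∀ a ∈ A \ A₂, ∀ b ∈ B \ B₂, ¬ G.Adj a b := by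
  obtain ⟨G₁, bip₁, expands₁, degA₁, degB₁⟩ :=
    exists_isBipartiteWith_expandsInto (hAB.mono_right hB₂) hA htB
  obtain ⟨G₂, bip₂, expands₂, degB₂, degA₂⟩ :=
    exists_isBipartiteWith_expandsInto (hAB.symm.mono_right hA₂) hB htA
  refine ⟨G₁ ⊔ G₂, ⟨hAB, fun u v huv => ?_⟩, expands₁.mono le_sup_left subset_rfl subset_rfl,
    expands₂.mono le_sup_right subset_rfl subset_rfl, fun v => ?_, fun a ha b hb hab => ?_⟩
  · rcases huv with h | h
    · have := bip₁.mem_of_adj h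
      grind
    · have := bip₂.mem_of_adj h
      grind
  · rw [SimpleGraph.neighborSet_sup]
    refine (Set.ncard_union_le _ _).trans ?_
    by_cases hv : v ∈ B
    · have hvA : v ∉ A := hAB.notMem_of_mem_right hv
      linarith [degB₁ v hvA, degB₂ v fun h => hvA (hA₂ h)]
    · linarith [degA₁ v fun h => hv (hB₂ h), degA₂ v hv]
  · rcases hab with h | h
    · exact hb.2 (SimpleGraph.isBipartiteWith_neighborSet_subset bip₁ ha.1 h)
    · exact ha.2 (SimpleGraph.isBipartiteWith_neighborSet_subset bip₂ hb.1 h.symm)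

theorem statement6_general {V : Type*} [Finite V] {A₁ A₂ B₁ B₂ : Set V} {m : ℕ}
    (hdis : [A₁, A₂, B₁, B₂].Pairwise Disjoint) (hA₁ : A₁.Nonempty) (hB₁ : B₁.Nonempty)
    (cardA₁ : A₁.ncard ≤ 3 * m) (cardB₁ : B₁.ncard ≤ 3 * m)
    (cardA₂ : A₂.ncard = 5 * m) (cardB₂ : B₂.ncard = 5 * m) :
    ∃ H : SimpleGraph V, Odd H.edgeSet.ncard ∧ (∀ v, (H.neighborSet v).ncard ≤ 58) ∧
      H.IsBipartiteWith (A₁ ∪ A₂) (B₁ ∪ B₂) ∧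
      ∀ A₁' ⊆ A₁, ∀ B₁' ⊆ B₁, A₁'.ncard = B₁'.ncard →
        ∃ M : H.Subgraph, M.IsMatching ∧ M.verts = (A₁' ∪ A₂) ∪ (B₁' ∪ B₂) ∧
          ∀ u v, M.Adj u v →
            (u ∈ A₁' ∪ A₂ ∧ v ∈ B₁' ∪ B₂) ∨ (u ∈ B₁' ∪ B₂ ∧ v ∈ A₁' ∪ A₂) := by
  obtain ⟨⟨hA, hAB₁, hAB₂⟩, ⟨hA₂B₁, hA₂B₂⟩, hB⟩ : (Disjoint A₁ A₂ ∧ Disjoint A₁ B₁ ∧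
      Disjoint A₁ B₂) ∧ (Disjoint A₂ B₁ ∧ Disjoint A₂ B₂) ∧ Disjoint B₁ B₂ := by simpa using hdis
  have hAB : Disjoint (A₁ ∪ A₂) (B₁ ∪ B₂) := by simp [*]
  have cardA := Set.ncard_union_le A₁ A₂
  have cardB := Set.ncard_union_le B₁ B₂
  obtain ⟨G, bip, expandsA, expandsB, deg_le, not_adj⟩ :=
    exists_isBipartiteWith_expandsInto_both (t := 4 * m) hAB Set.subset_union_right
      Set.subset_union_right (by omega) (by omega) (by omega) (by omega)
  obtain ⟨a, ha⟩ := hA₁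
  obtain ⟨b, hb⟩ := hB₁
  obtain ⟨H, hGH, hHG, hodd⟩ := exists_odd_ncard_edgeSet (hAB₁.ne_of_mem ha hb)
    (not_adj a ⟨.inl ha, hA.notMem_of_mem_left ha⟩ b ⟨.inl hb, hB.notMem_of_mem_left hb⟩)
  refine ⟨H, hodd, fun v => ?_, ⟨hAB, fun u v huv => ?_⟩, fun A₁' hA₁' B₁' hB₁' hcard => ?_⟩
  · exact (ncard_neighborSet_le_add_one_of_le_sup_edge hHG v).trans (by grind)
  · rcases hHG huv with h | h
    · exact bip.mem_of_adj h
    · rw [SimpleGraph.edge_adj] at h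
      grind
  · have subA : A₁' ∪ A₂ ⊆ A₁ ∪ A₂ := Set.union_subset_union_left A₂ hA₁'
    have subB : B₁' ∪ B₂ ⊆ B₁ ∪ B₂ := Set.union_subset_union_left B₂ hB₁'
    have cardA' := Set.ncard_union_eq (hA.mono_left hA₁')
    have cardB' := Set.ncard_union_eq (hB.mono_left hB₁')
    have := Set.ncard_le_ncard subA
    exact exists_isMatching_of_expandsInto (t := 4 * m) (hAB.mono subA subB) (by omega) (by omega)
      (expandsA.mono hGH subA Set.subset_union_right)
      (expandsB.mono hGH subB Set.subset_union_right)

/-- For every sufficiently large `m` there is a bipartite graph `H`, with an odd number of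
edges, maximum degree at most `102`, and vertex classes `A₁ ∪ A₂` and `B₁ ∪ B₂` with
`|A₁| = |B₁| = 2m` and `|A₂| = |B₂| = 5m`, such that for all `A₁' ⊆ A₁`, `B₁' ⊆ B₁` with
`|A₁'| = |B₁'| ≥ m` there is a perfect matching in `H` between `A₁' ∪ A₂` and `B₁' ∪ B₂`. -/
theorem statement6 :
    ∃ M : ℕ, ∀ m : ℕ, M ≤ m →
      ∃ (H : SimpleGraph (Fin (14 * m))) (A₁ A₂ B₁ B₂ : Set (Fin (14 * m))),
        Odd H.edgeSet.ncard ∧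
        (∀ v, (H.neighborSet v).ncard ≤ 102) ∧
        [A₁, A₂, B₁, B₂].Pairwise Disjoint ∧
        A₁.ncard = 2 * m ∧ B₁.ncard = 2 * m ∧ A₂.ncard = 5 * m ∧ B₂.ncard = 5 * m ∧
        (∀ u v, H.Adj u v →
          (u ∈ A₁ ∪ A₂ ∧ v ∈ B₁ ∪ B₂) ∨ (u ∈ B₁ ∪ B₂ ∧ v ∈ A₁ ∪ A₂)) ∧
        ∀ A₁' ⊆ A₁, ∀ B₁' ⊆ B₁, A₁'.ncard = B₁'.ncard → m ≤ A₁'.ncard →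
          ∃ M' : H.Subgraph, M'.IsMatching ∧
            M'.verts = (A₁' ∪ A₂) ∪ (B₁' ∪ B₂) ∧
            ∀ u v, M'.Adj u v →
              (u ∈ A₁' ∪ A₂ ∧ v ∈ B₁' ∪ B₂) ∨ (u ∈ B₁' ∪ B₂ ∧ v ∈ A₁' ∪ A₂) := by
  refine ⟨1, fun m hm => ?_⟩
  obtain ⟨C, hdis, hcard⟩ := exists_pairwise_disjoint_ncard (V := Fin (14 * m))
    ![2 * m, 5 * m, 2 * m, 5 * m] (by simp [Fin.sum_univ_four]; omega)
  have hC : [C 0, C 1, C 2, C 3].Pairwise Disjoint := by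
    have disjoint {i j} (hij : i ≠ j) : Disjoint (C i) (C j) := hdis hij
    simp [disjoint]
  obtain ⟨cardA₁, cardA₂, cardB₁, cardB₂⟩ : (C 0).ncard = 2 * m ∧ (C 1).ncard = 5 * m ∧
      (C 2).ncard = 2 * m ∧ (C 3).ncard = 5 * m := ⟨hcard 0, hcard 1, hcard 2, hcard 3⟩
  obtain ⟨H, hodd, deg_le, bip, matchings⟩ := statement6_general hC
    (Set.nonempty_of_ncard_ne_zero (by omega)) (Set.nonempty_of_ncard_ne_zero (by omega))
    (by omega) (by omega) cardA₂ cardB₂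
  exact ⟨H, C 0, C 1, C 2, C 3, hodd, fun v => (deg_le v).trans (by norm_num), hC,
    cardA₁, cardB₁, cardA₂, cardB₂, fun _ _ huv => bip.mem_of_adj huv,
    fun A₁' hA₁' B₁' hB₁' h _ => matchings A₁' hA₁' B₁' hB₁' h⟩
end

section
/- Let G be an n-vertex graph and V' ⊆ V(G). Let d ≥ (log n)^{15}, let 0 ≤ d' ≤ d, let 1 ≤ t ≤ d and s ≥ 0 be integers, and let τ = 1 or τ = t−1. Let V^i_j, for i ∈ [t] and j ∈ [s], be pairwise disjoint subsets of V(G) \ V' each of size at most d^{1/8}, and let V = V' ∪ (⋃_{i∈[t], j∈[s]} V^i_j). For every j ∈ [s], independently, let S_j be a uniformly random subset of [t] of size τ. Let U be a uniformly random subset of V' of size ⌊(τ/t)·|V'|⌋, independent of the S_j. Let Z denote the random set U ∪ (⋃_{j∈[s], i∈S_j} V^i_j). Then: (1) if a vertex v ∈ V(G) satisfies d_G(v,V) ≤ d + d', then d_G(v,Z) ≤ (τ/t)·d + d' + d^{2/3} with probability 1 − n^{−ω(1)} (that is, for every constant K > 0, the failure probability is at most n^{−K} for all sufficiently large n); and (2)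 if a vertex v ∈ V(G) satisfies d_G(v,V) ≥ d − d', then d_G(v,Z) ≥ (τ/t)·d − d' − d^{2/3} with probability 1 − n^{−ω(1)}. -/
/-- The sample space for choosing, independently for each `j ∈ [s]`, a uniformly random
subset `S_j ⊆ [t]` of size `τ`, together with a uniformly random subset `U ⊆ V'` of size
`⌊(τ/t)·|V'|⌋` (independent of the `S_j`); the product of uniform distributions is the
uniform distribution on this product space. -/
abbrev Omega9 (n s t τ : ℕ) (V' : Set (Fin n)) : Type :=
  (Fin s → {S : Finset (Fin t) // S.card = τ}) ×
    {U : Finset (Fin n) // (↑U : Set (Fin n)) ⊆ V' ∧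
      U.card = ⌊(τ : ℝ) / t * V'.ncard⌋₊}

/-- The random set `Z = U ∪ ⋃_{j ∈ [s], i ∈ S_j} V^i_j` determined by an outcome `ω`. -/
def Z9 {n s t τ : ℕ} {V' : Set (Fin n)} (Vij : Fin t → Fin s → Set (Fin n))
    (ω : Omega9 n s t τ V') : Set (Fin n) :=
  (↑ω.2.1 : Set (Fin n)) ∪ ⋃ j : Fin s, ⋃ i ∈ (ω.1 j).1, Vij i j

/-!
Weights in `[0, M]` summed over a uniformly random `k`-subset have an exponential moment no larger
than under independent sampling with probability `p = k / #V`: expand `∏ (1 + y i)` over subsets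
`T` and use `ℙ(T ⊆ U) ≤ p ^ #T`. Hence `𝔼 exp (ν X) ≤ exp (ν 𝔼 X + ν² M ∑ a)` when `0 ≤ ν` and
`ν M ≤ 1`; passing to the complement of the random subset gives the same bound for `ν ≤ 0`. The
degree into `Z` is a sum of independent variables of this kind, with `M = d ^ (1 / 8)` for the
blocks and `M = 1` for `V'`, so Markov's inequality with `|ν|` of order `d ^ (-11 / 24)` bounds the
probability of a deviation by `d ^ (2 / 3)` by `exp (1 - d ^ (5 / 24) / 9)`. This is `n ^ (-ω(1))`
as soon as `d` is at least the fifth power of `log n`.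
-/

section

open Finset
open Real (exp)
open scoped BigOperators

variable {α : Type*} {V : Finset α} {k : ℕ} {a : α → ℝ} {M ν : ℝ}

lemma exp_mul_sub_one_le {x : ℝ} (hν : 0 ≤ ν) (hx : 0 ≤ x) (hxM : x ≤ M) (hνM : ν * M ≤ 1) :
    exp (ν * x) - 1 ≤ (ν + ν ^ 2 * M) * x := by
  have hνx : |ν * x| ≤ 1 := by
    rw [abs_of_nonneg (mul_nonneg hν hx)]
    exact (mul_le_mul_of_nonneg_left hxM hν).trans hνM
  have hquad : exp (ν * x) - 1 - ν * x ≤ (ν * x) ^ 2 :=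
    (abs_le.mp (Real.abs_exp_sub_one_sub_id_le hνx)).2
  have hsq : ν ^ 2 * (x * x) ≤ ν ^ 2 * (M * x) := by gcongr
  linarith

lemma descFactorial_mul_pow_le {k n : ℕ} (hkn : k ≤ n) (r : ℕ) :
    k.descFactorial r * n ^ r ≤ n.descFactorial r * k ^ r := by
  induction r with
  | zero => simp
  | succ r ih =>
    have hfactor : (k - r) * n ≤ (n - r) * k := by
      rw [Nat.sub_mul, Nat.sub_mul, mul_comm n k]
      gcongr
    calc k.descFactorial (r + 1) * n ^ (r + 1)
        = (k - r) * n * (k.descFactorial r * n ^ r) := by rw [Nat.descFactorial_succ]; ring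
      _ ≤ (n - r) * k * (n.descFactorial r * k ^ r) := Nat.mul_le_mul hfactor ih
      _ = n.descFactorial (r + 1) * k ^ (r + 1) := by rw [Nat.descFactorial_succ]; ring

lemma choose_sub_mul_pow_le {k n r : ℕ} (hrk : r ≤ k) (hkn : k ≤ n) :
    (n - r).choose (k - r) * n ^ r ≤ n.choose k * k ^ r := by
  have hpos : 0 < n.descFactorial r := Nat.descFactorial_pos.2 (hrk.trans hkn)
  have hchoose : n.descFactorial r * (n - r).choose (k - r) = n.choose k * k.descFactorial r := by
    rw [Nat.descFactorial_eq_factorial_mul_choose, Nat.descFactorial_eq_factorial_mul_choose,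
      mul_assoc, ← Nat.choose_mul hrk, mul_left_comm]
  refine Nat.le_of_mul_le_mul_left ?_ hpos
  calc n.descFactorial r * ((n - r).choose (k - r) * n ^ r)
      = n.choose k * (k.descFactorial r * n ^ r) := by rw [← mul_assoc, hchoose, mul_assoc]
    _ ≤ n.choose k * (n.descFactorial r * k ^ r) := by
        gcongr n.choose k * ?_
        exact descFactorial_mul_pow_le hkn r
    _ = n.descFactorial r * (n.choose k * k ^ r) := by ring

lemma expect_powersetCard_subset_le [DecidableEq α] {T : Finset α} (hTV : T ⊆ V) (hk : k ≤ #V) :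
    𝔼 U ∈ V.powersetCard k, (if T ⊆ U then 1 else 0 : ℝ) ≤ ((k : ℝ) / #V) ^ #T := by
  rw [expect_eq_sum_div_card, sum_boole, card_powersetCard]
  rcases lt_or_ge k #T with hTk | hTk
  · have hempty : {U ∈ V.powersetCard k | T ⊆ U} = ∅ := filter_eq_empty_iff.2 fun U hU hTU ↦
      (hTk.trans_le (card_le_card hTU)).ne' (mem_powersetCard.1 hU).2
    rw [hempty, card_empty, Nat.cast_zero, zero_div]
    positivity
  · rcases V.eq_empty_or_nonempty with rfl | hV
    · simp_all
    have hVpos : (0 : ℝ) < #V := by exact_mod_cast hV.card_pos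
    have hchoose : (0 : ℝ) < (#V).choose k := by exact_mod_cast Nat.choose_pos hk
    rw [card_filter_powersetCard_subset T V k hTV hTk, div_pow,
      div_le_div_iff₀ hchoose (pow_pos hVpos _)]
    exact_mod_cast (choose_sub_mul_pow_le hTk hk).trans_eq (mul_comm _ _)

lemma expect_powersetCard_prod_one_add_le (hk : k ≤ #V) {y : α → ℝ} (hy : ∀ i ∈ V, 0 ≤ y i) :
    𝔼 U ∈ V.powersetCard k, ∏ i ∈ U, (1 + y i) ≤ ∏ i ∈ V, (1 + (k : ℝ) / #V * y i) := by
  classical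
  have hexpand : ∀ U ∈ V.powersetCard k,
      ∏ i ∈ U, (1 + y i) = ∑ T ∈ V.powerset, (if T ⊆ U then 1 else 0) * ∏ i ∈ T, y i := by
    intro U hU
    simp only [ite_mul, one_mul, zero_mul]
    rw [prod_one_add, ← sum_filter]
    congr 1
    ext T
    simp only [mem_powerset, mem_filter, iff_and_self]
    exact fun hTU ↦ hTU.trans (mem_powersetCard.1 hU).1
  rw [expect_congr rfl hexpand, expect_sum_comm, prod_one_add]
  refine sum_le_sum fun T hT ↦ ?_
  rw [mem_powerset] at hT
  rw [← expect_mul, prod_mul_distrib, prod_const]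
  exact mul_le_mul_of_nonneg_right (expect_powersetCard_subset_le hT hk)
    (prod_nonneg fun i hi ↦ hy i (hT hi))

lemma expect_powersetCard_exp_sum_le_of_nonneg (hk : k ≤ #V) (ha : ∀ i ∈ V, 0 ≤ a i)
    (haM : ∀ i ∈ V, a i ≤ M) (hν : 0 ≤ ν) (hνM : ν * M ≤ 1) :
    𝔼 U ∈ V.powersetCard k, exp (ν * ∑ i ∈ U, a i) ≤
      exp (ν * ((k : ℝ) / #V * ∑ i ∈ V, a i) + ν ^ 2 * M * ∑ i ∈ V, a i) := by
  have hp : (k : ℝ) / #V ≤ 1 := div_le_one_of_le₀ (by exact_mod_cast hk) (Nat.cast_nonneg _)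
  have hy : ∀ i ∈ V, 0 ≤ exp (ν * a i) - 1 := fun i hi ↦
    sub_nonneg.2 (Real.one_le_exp (mul_nonneg hν (ha i hi)))
  have hterm : ∀ i ∈ V, (k : ℝ) / #V * (exp (ν * a i) - 1) ≤
      ν * ((k : ℝ) / #V * a i) + ν ^ 2 * M * a i := by
    intro i hi
    have hvar : 0 ≤ ν ^ 2 * M * a i :=
      mul_nonneg (mul_nonneg (sq_nonneg ν) ((ha i hi).trans (haM i hi))) (ha i hi)
    calc (k : ℝ) / #V * (exp (ν * a i) - 1)
        ≤ (k : ℝ) / #V * ((ν + ν ^ 2 * M) * a i) := by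
          gcongr
          exact exp_mul_sub_one_le hν (ha i hi) (haM i hi) hνM
      _ = ν * ((k : ℝ) / #V * a i) + (k : ℝ) / #V * (ν ^ 2 * M * a i) := by ring
      _ ≤ ν * ((k : ℝ) / #V * a i) + ν ^ 2 * M * a i :=
          add_le_add le_rfl (mul_le_of_le_one_left hvar hp)
  calc 𝔼 U ∈ V.powersetCard k, exp (ν * ∑ i ∈ U, a i)
      = 𝔼 U ∈ V.powersetCard k, ∏ i ∈ U, (1 + (exp (ν * a i) - 1)) := by
        simp only [add_sub_cancel, mul_sum, Real.exp_sum]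
    _ ≤ ∏ i ∈ V, (1 + (k : ℝ) / #V * (exp (ν * a i) - 1)) :=
        expect_powersetCard_prod_one_add_le hk hy
    _ ≤ ∏ i ∈ V, exp (ν * ((k : ℝ) / #V * a i) + ν ^ 2 * M * a i) := by
        refine prod_le_prod (fun i hi ↦ ?_) fun i hi ↦ ?_
        · exact add_nonneg zero_le_one (mul_nonneg (by positivity) (hy i hi))
        · rw [add_comm]
          exact (Real.add_one_le_exp _).trans (Real.exp_le_exp.2 (hterm i hi))
    _ = _ := by simp only [← Real.exp_sum, sum_add_distrib, mul_sum]

lemma expect_powersetCard_sdiff [DecidableEq α] (hk : k ≤ #V) (f : Finset α → ℝ) :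
    𝔼 U ∈ V.powersetCard (#V - k), f (V \ U) = 𝔼 U ∈ V.powersetCard k, f U := by
  refine expect_nbij' (V \ ·) (V \ ·) ?_ ?_ ?_ ?_ fun _ _ ↦ rfl
  all_goals intro U hU; obtain ⟨hUV, hUk⟩ := mem_powersetCard.1 hU
  · exact mem_powersetCard.2 ⟨sdiff_subset, by rw [card_sdiff_of_subset hUV]; omega⟩
  · exact mem_powersetCard.2 ⟨sdiff_subset, by rw [card_sdiff_of_subset hUV]; omega⟩
  · exact Finset.sdiff_sdiff_eq_self hUV
  · exact Finset.sdiff_sdiff_eq_self hUV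

lemma expect_powersetCard_exp_sum_le (hk : k ≤ #V) (ha : ∀ i ∈ V, 0 ≤ a i)
    (haM : ∀ i ∈ V, a i ≤ M) (hνM : |ν| * M ≤ 1) :
    𝔼 U ∈ V.powersetCard k, exp (ν * ∑ i ∈ U, a i) ≤
      exp (ν * ((k : ℝ) / #V * ∑ i ∈ V, a i) + ν ^ 2 * M * ∑ i ∈ V, a i) := by
  classical
  rcases le_total 0 ν with hν | hν
  · rw [abs_of_nonneg hν] at hνM
    exact expect_powersetCard_exp_sum_le_of_nonneg hk ha haM hν hνM
  rcases V.eq_empty_or_nonempty with rfl | hV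
  · simp [show k = 0 by simpa using hk]
  rw [abs_of_nonpos hν] at hνM
  have hVpos : (#V : ℝ) ≠ 0 := by exact_mod_cast hV.card_pos.ne'
  have hcompl : ∀ U ∈ V.powersetCard (#V - k), exp (ν * ∑ i ∈ V \ U, a i) =
      exp (ν * ∑ i ∈ V, a i) * exp (-ν * ∑ i ∈ U, a i) := by
    intro U hU
    rw [← Real.exp_add, ← sum_sdiff (mem_powersetCard.1 hU).1]
    ring_nf
  calc 𝔼 U ∈ V.powersetCard k, exp (ν * ∑ i ∈ U, a i)
      = exp (ν * ∑ i ∈ V, a i) * 𝔼 U ∈ V.powersetCard (#V - k), exp (-ν * ∑ i ∈ U, a i) := by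
        rw [← expect_powersetCard_sdiff hk, expect_congr rfl hcompl, mul_expect]
    _ ≤ exp (ν * ∑ i ∈ V, a i) * exp (-ν * (((#V - k : ℕ) : ℝ) / #V * ∑ i ∈ V, a i) +
          (-ν) ^ 2 * M * ∑ i ∈ V, a i) := by
        gcongr
        exact expect_powersetCard_exp_sum_le_of_nonneg (Nat.sub_le _ _) ha haM
          (neg_nonneg.2 hν) hνM
    _ = exp (ν * ((k : ℝ) / #V * ∑ i ∈ V, a i) + ν ^ 2 * M * ∑ i ∈ V, a i) := by
        rw [← Real.exp_add, Nat.cast_sub hk]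
        congr 1
        field_simp
        ring

lemma abs_floor_div_mul_sum_sub_le {p : ℝ} (hp : 0 ≤ p) (hM : 0 ≤ M) (ha : ∀ i ∈ V, 0 ≤ a i)
    (haM : ∀ i ∈ V, a i ≤ M) :
    |(⌊p * #V⌋₊ : ℝ) / #V * ∑ i ∈ V, a i - p * ∑ i ∈ V, a i| ≤ M := by
  rcases V.eq_empty_or_nonempty with rfl | hV
  · simpa using hM
  have hVpos : (0 : ℝ) < #V := by exact_mod_cast hV.card_pos
  have hsum : ∑ i ∈ V, a i ≤ #V * M := by
    rw [← nsmul_eq_mul]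
    exact sum_le_card_nsmul V a M haM
  have hfloor : |(⌊p * #V⌋₊ : ℝ) - p * #V| ≤ 1 := by
    have hle := Nat.floor_le (mul_nonneg hp hVpos.le)
    have hlt := Nat.lt_floor_add_one (p * #V)
    rw [abs_le]
    constructor <;> linarith
  calc |(⌊p * #V⌋₊ : ℝ) / #V * ∑ i ∈ V, a i - p * ∑ i ∈ V, a i|
      = |(⌊p * #V⌋₊ : ℝ) - p * #V| * ((∑ i ∈ V, a i) / #V) := by
        rw [← abs_of_nonneg (div_nonneg (sum_nonneg ha) hVpos.le), ← abs_mul]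
        congr 1
        field_simp
    _ ≤ 1 * M := by
        gcongr
        · exact div_nonneg (sum_nonneg ha) hVpos.le
        · rwa [div_le_iff₀' hVpos]
    _ = M := one_mul M

lemma expect_powersetCard_floor_exp_sum_le {p : ℝ} (hp₀ : 0 ≤ p) (hp₁ : p ≤ 1) (hM : 0 ≤ M)
    (ha : ∀ i ∈ V, 0 ≤ a i) (haM : ∀ i ∈ V, a i ≤ M) (hνM : |ν| * M ≤ 1) :
    𝔼 U ∈ V.powersetCard ⌊p * #V⌋₊, exp (ν * ∑ i ∈ U, a i) ≤
      exp (ν * (p * ∑ i ∈ V, a i) + ν ^ 2 * M * ∑ i ∈ V, a i + |ν| * M) := by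
  have hk : ⌊p * #V⌋₊ ≤ #V :=
    Nat.floor_le_of_le (mul_le_of_le_one_left (Nat.cast_nonneg _) hp₁)
  refine (expect_powersetCard_exp_sum_le hk ha haM hνM).trans (Real.exp_le_exp.2 ?_)
  have hround : ν * ((⌊p * #V⌋₊ : ℝ) / #V * ∑ i ∈ V, a i - p * ∑ i ∈ V, a i) ≤ |ν| * M :=
    calc _ ≤ |ν| * |(⌊p * #V⌋₊ : ℝ) / #V * ∑ i ∈ V, a i - p * ∑ i ∈ V, a i| :=
          (le_abs_self _).trans_eq (abs_mul _ _)
      _ ≤ |ν| * M := by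
          gcongr
          exact abs_floor_div_mul_sum_sub_le hp₀ hM ha haM
  linarith

lemma expect_subtype {p : α → Prop} [Fintype {x // p x}] (h : ∀ x, x ∈ V ↔ p x) (f : α → ℝ) :
    𝔼 x : {x // p x}, f x = 𝔼 x ∈ V, f x := by
  rw [Fintype.expect_eq_sum_div_card, expect_eq_sum_div_card, Fintype.card_of_subtype V h,
    sum_subtype V h]

lemma expect_pi_prod {ι : Type*} [Fintype ι] [DecidableEq ι] {A : ι → Type*} [∀ j, Fintype (A j)]
    (f : ∀ j, A j → ℝ) : 𝔼 ω : ∀ j, A j, ∏ j, f j (ω j) = ∏ j, 𝔼 x, f j x := by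
  simp only [Fintype.expect_eq_sum_div_card, prod_div_distrib, prod_univ_sum,
    Fintype.piFinset_univ, Fintype.card_pi, Nat.cast_prod]

lemma expect_exp_sum_add_le {ι : Type*} [Fintype ι] [DecidableEq ι] {A : ι → Type*}
    [∀ j, Fintype (A j)] {B : Type*} [Fintype B] {f : ∀ j, A j → ℝ} {g : B → ℝ} {c : ι → ℝ} {e : ℝ}
    (hf : ∀ j, 𝔼 x, exp (f j x) ≤ exp (c j)) (hg : 𝔼 y, exp (g y) ≤ exp e) :
    𝔼 ω : (∀ j, A j) × B, exp (∑ j, f j (ω.1 j) + g ω.2) ≤ exp (∑ j, c j + e) := by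
  simp only [Real.exp_add, Real.exp_sum]
  calc 𝔼 ω : (∀ j, A j) × B, (∏ j, exp (f j (ω.1 j))) * exp (g ω.2)
      = (∏ j, 𝔼 x, exp (f j x)) * 𝔼 y, exp (g y) := by
        rw [← expect_pi_prod fun j x ↦ exp (f j x), Fintype.expect_mul_expect,
          ← univ_product_univ, expect_product]
    _ ≤ (∏ j, exp (c j)) * exp e := by
        gcongr with j _
        exact hf j

lemma expect_card_eq_exp_sum_le [Fintype α] (hk : k ≤ Fintype.card α) (ha : ∀ i, 0 ≤ a i)
    (haM : ∀ i, a i ≤ M) (hνM : |ν| * M ≤ 1) :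
    𝔼 S : {S : Finset α // #S = k}, exp (ν * ∑ i ∈ S.1, a i) ≤
      exp (ν * ((k : ℝ) / Fintype.card α * ∑ i, a i) + ν ^ 2 * M * ∑ i, a i) := by
  rw [expect_subtype (V := powersetCard k univ) (by simp) fun S ↦ exp (ν * ∑ i ∈ S, a i)]
  exact expect_powersetCard_exp_sum_le hk (fun i _ ↦ ha i) (fun i _ ↦ haM i) hνM

lemma sum_indicator_one_eq_ncard_inter (A : Set α) (U : Finset α) :
    ∑ x ∈ U, A.indicator (1 : α → ℝ) x = (A ∩ U).ncard := by
  classical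
  simp only [Set.indicator_apply, Pi.one_apply, sum_boole]
  rw [← Set.ncard_coe_finset, coe_filter, Set.inter_comm]
  rfl

lemma expect_subset_exp_ncard_inter_le {p : ℝ} (hp₀ : 0 ≤ p) (hp₁ : p ≤ 1) (hν : |ν| ≤ 1)
    (A : Set α) {V' : Set α} (hV' : V'.Finite)
    [Fintype {U : Finset α // (U : Set α) ⊆ V' ∧ #U = ⌊p * V'.ncard⌋₊}] :
    𝔼 U : {U : Finset α // (U : Set α) ⊆ V' ∧ #U = ⌊p * V'.ncard⌋₊},
      exp (ν * (A ∩ U.1).ncard) ≤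
        exp (ν * (p * (A ∩ V').ncard) + ν ^ 2 * (A ∩ V').ncard + |ν|) := by
  lift V' to Finset α using hV'
  rw [expect_subtype (V := powersetCard ⌊p * (V' : Set α).ncard⌋₊ V')
    (by simp [mem_powersetCard]) fun U ↦ exp (ν * (A ∩ U).ncard), Set.ncard_coe_finset]
  simpa only [sum_indicator_one_eq_ncard_inter, mul_one] using
    expect_powersetCard_floor_exp_sum_le (V := V') (a := A.indicator 1) hp₀ hp₁
      zero_le_one (fun x _ ↦ Set.indicator_nonneg (by simp) x)
      (fun x _ ↦ Set.indicator_apply_le' (by simp) (by simp)) ((mul_one |ν|).trans_le hν)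

lemma card_subtype_le_of_expect_exp_le {Ω : Type*} [Fintype Ω] {X : Ω → ℝ} {P : Ω → Prop}
    {c δ : ℝ} (hX : 𝔼 ω, exp (X ω) ≤ exp c) (hP : ∀ ω, P ω → δ ≤ X ω) :
    (Nat.card {ω // P ω} : ℝ) ≤ exp (c - δ) * Nat.card Ω := by
  classical
  have hmarkov : (Nat.card {ω // P ω} : ℝ) * exp δ ≤ Nat.card Ω * exp c :=
    calc (Nat.card {ω // P ω} : ℝ) * exp δ = ∑ ω with P ω, exp δ := by
          rw [Nat.card_eq_fintype_card, Fintype.card_subtype, sum_const, nsmul_eq_mul]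
      _ ≤ ∑ ω with P ω, exp (X ω) :=
          sum_le_sum fun ω hω ↦ Real.exp_le_exp.2 (hP ω (mem_filter.1 hω).2)
      _ ≤ ∑ ω, exp (X ω) :=
          sum_le_sum_of_subset_of_nonneg (filter_subset _ _) fun _ _ _ ↦ (Real.exp_pos _).le
      _ = Nat.card Ω * 𝔼 ω, exp (X ω) := by
          rw [Nat.card_eq_fintype_card, Fintype.card_mul_expect]
      _ ≤ Nat.card Ω * exp c := by gcongr
  rw [Real.exp_sub, div_mul_eq_mul_div, le_div_iff₀ (Real.exp_pos δ), mul_comm (exp c)]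
  exact hmarkov

lemma ncard_inter_union_iUnion [Finite α] {ι κ : Type*} [Fintype κ] {B : ι → κ → Set α}
    {V' U : Set α} (hBV' : ∀ i j, Disjoint (B i j) V')
    (hB : ∀ i j i' j', (i, j) ≠ (i', j') → Disjoint (B i j) (B i' j'))
    (A : Set α) (hU : U ⊆ V') (S : κ → Finset ι) :
    (A ∩ (U ∪ ⋃ j, ⋃ i ∈ S j, B i j)).ncard =
      (A ∩ U).ncard + ∑ j, ∑ i ∈ S j, (A ∩ B i j).ncard := by
  have hBU : ∀ i j, Disjoint (A ∩ B i j) (A ∩ U) := fun i j ↦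
    ((hBV' i j).mono_right hU).mono Set.inter_subset_right Set.inter_subset_right
  have hAB : ∀ i j i' j', (i, j) ≠ (i', j') → Disjoint (A ∩ B i j) (A ∩ B i' j') :=
    fun i j i' j' h ↦ (hB i j i' j' h).mono Set.inter_subset_right Set.inter_subset_right
  simp only [Set.inter_union_distrib_left, Set.inter_iUnion]
  rw [Set.ncard_union_eq, Set.ncard_iUnion_of_finite, finsum_eq_sum_of_fintype]
  · congr 1
    refine sum_congr rfl fun j _ ↦ ?_
    rw [← finsum_mem_coe_finset, ← (S j).finite_toSet.ncard_biUnion]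
    · rfl
    · exact fun i _ ↦ Set.toFinite _
    · exact fun i _ i' _ hii' ↦ hAB i j i' j (by simp [hii'])
  · exact fun j ↦ Set.toFinite _
  · intro j j' hjj'
    simp only [Function.onFun, Set.disjoint_iUnion_left, Set.disjoint_iUnion_right]
    exact fun i' _ i _ ↦ hAB i j i' j' (by simp [hjj'])
  · simp only [Set.disjoint_iUnion_right]
    exact fun j i _ ↦ (hBU i j).symm

lemma ncard_inter_iUnion_of_subset [Finite α] {ι κ : Type*} [Fintype ι] [Fintype κ]
    {B : ι → κ → Set α} {V' A : Set α} (hBV' : ∀ i j, Disjoint (B i j) V')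
    (hB : ∀ i j i' j', (i, j) ≠ (i', j') → Disjoint (B i j) (B i' j'))
    (hA : A ⊆ V' ∪ ⋃ i, ⋃ j, B i j) :
    A.ncard = (A ∩ V').ncard + ∑ j, ∑ i, (A ∩ B i j).ncard := by
  rw [← ncard_inter_union_iUnion hBV' hB A subset_rfl]
  rw [Set.iUnion_comm] at hA
  simp [Set.inter_eq_left.2 hA]

end

section

open Finset Filter
open Real (exp)
open scoped BigOperators

variable {n s t τ : ℕ} {V' : Set (Fin n)} {Vij : Fin t → Fin s → Set (Fin n)} {d d' : ℝ}

-- At `ν = d ^ (-11 / 24) / 6` the variance term `ν ^ 2 * d ^ (1 / 8) * (2 * d)` and the gain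
-- `ν * d ^ (2 / 3)` both have order `d ^ (5 / 24)`.
lemma exists_pos_mul_rpow_le_and_sub_le (hd : 1 ≤ d) :
    ∃ ν : ℝ, 0 < ν ∧ ν * d ^ (1 / 8 : ℝ) ≤ 1 ∧
      ν ^ 2 * d ^ (1 / 8 : ℝ) * (2 * d) + ν - ν * d ^ (2 / 3 : ℝ) ≤
        1 - d ^ (5 / 24 : ℝ) / 9 := by
  have hd₀ : 0 < d := zero_lt_one.trans_le hd
  set ν : ℝ := d ^ (-11 / 24 : ℝ) / 6 with hν
  have hν₁ : ν ≤ 1 := by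
    linarith [Real.rpow_le_one_of_one_le_of_nonpos hd (by norm_num : (-11 / 24 : ℝ) ≤ 0)]
  have hνM : ν * d ^ (1 / 8 : ℝ) = d ^ (-1 / 3 : ℝ) / 6 := by
    rw [hν, div_mul_eq_mul_div, ← Real.rpow_add hd₀]
    norm_num
  have hgain : ν * d ^ (2 / 3 : ℝ) = d ^ (5 / 24 : ℝ) / 6 := by
    rw [hν, div_mul_eq_mul_div, ← Real.rpow_add hd₀]
    norm_num
  have hvar : ν ^ 2 * d ^ (1 / 8 : ℝ) * (2 * d) = d ^ (5 / 24 : ℝ) / 18 :=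
    calc ν ^ 2 * d ^ (1 / 8 : ℝ) * (2 * d)
        = d ^ (-11 / 24 : ℝ) * d ^ (-11 / 24 : ℝ) * d ^ (1 / 8 : ℝ) * d ^ (1 : ℝ) / 18 := by
          rw [hν, Real.rpow_one]
          ring
      _ = d ^ (5 / 24 : ℝ) / 18 := by
          rw [← Real.rpow_add hd₀, ← Real.rpow_add hd₀, ← Real.rpow_add hd₀]
          norm_num
  refine ⟨ν, by positivity, ?_, by linarith⟩
  linarith [Real.rpow_le_one_of_one_le_of_nonpos hd (by norm_num : (-1 / 3 : ℝ) ≤ 0)]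

lemma eventually_one_le_and_exp_le_rpow_neg {K : ℝ} (hK : 0 ≤ K) :
    ∀ᶠ n : ℕ in atTop, ∀ d : ℝ, Real.logb 2 n ^ 5 ≤ d →
      1 ≤ d ∧ exp (1 - d ^ (5 / 24 : ℝ) / 9) ≤ (n : ℝ) ^ (-K) := by
  have hlogb : Tendsto (fun n : ℕ ↦ Real.logb 2 n) atTop atTop :=
    (Real.tendsto_logb_atTop one_lt_two).comp tendsto_natCast_atTop_atTop
  have hrpow := (tendsto_rpow_atTop (by norm_num : (0 : ℝ) < 1 / 24)).comp hlogb
  filter_upwards [hlogb.eventually_ge_atTop 1, hrpow.eventually_ge_atTop (9 * (K + 1)),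
    eventually_gt_atTop 0] with n hL₁ hLK hn d hd
  rw [Function.comp_apply] at hLK
  set L := Real.logb 2 n
  have hL₀ : 0 < L := zero_lt_one.trans_le hL₁
  have hn₀ : (0 : ℝ) < n := by exact_mod_cast hn
  have hlog : Real.log n ≤ L :=
    calc Real.log n = L * Real.log 2 := (div_mul_cancel₀ _ (Real.log_pos one_lt_two).ne').symm
      _ ≤ L := mul_le_of_le_one_right hL₀.le (Real.log_two_lt_d9.le.trans (by norm_num))
  have hpow : 9 * ((K + 1) * L) ≤ d ^ (5 / 24 : ℝ) :=
    calc 9 * ((K + 1) * L) = 9 * (K + 1) * L := by ring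
      _ ≤ L ^ (1 / 24 : ℝ) * L ^ (1 : ℝ) := by rw [Real.rpow_one]; gcongr
      _ = (L ^ 5) ^ (5 / 24 : ℝ) := by
          rw [← Real.rpow_add hL₀, ← Real.rpow_natCast, ← Real.rpow_mul hL₀.le]
          norm_num
      _ ≤ d ^ (5 / 24 : ℝ) := by gcongr
  refine ⟨(one_le_pow₀ hL₁).trans hd, ?_⟩
  rw [Real.rpow_def_of_pos hn₀, Real.exp_le_exp]
  linarith [mul_le_mul_of_nonneg_left hlog hK]

lemma Z9_subset (ω : Omega9 n s t τ V') : Z9 Vij ω ⊆ V' ∪ ⋃ i, ⋃ j, Vij i j := by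
  refine Set.union_subset_union ω.2.2.1 ?_
  rw [Set.iUnion_comm]
  exact Set.iUnion_mono fun j ↦ Set.iUnion_mono fun i ↦ Set.iUnion_subset fun _ ↦ subset_rfl

section

variable (ht : 1 ≤ t) (hτ : τ ≤ t) (hVV' : ∀ i j, Disjoint (Vij i j) V')
  (hV : ∀ i j i' j', (i, j) ≠ (i', j') → Disjoint (Vij i j) (Vij i' j'))
include ht hτ hVV' hV

open scoped Classical in
lemma expect_Omega9_exp_le {A : Set (Fin n)} {M ν : ℝ}
    (hM : 1 ≤ M) (hVM : ∀ i j, ((Vij i j).ncard : ℝ) ≤ M) (hνM : |ν| * M ≤ 1)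
    (hA : A ⊆ V' ∪ ⋃ i, ⋃ j, Vij i j) :
    𝔼 ω : Omega9 n s t τ V', exp (ν * (A ∩ Z9 Vij ω).ncard) ≤
      exp (ν * ((τ : ℝ) / t * A.ncard) + ν ^ 2 * M * A.ncard + |ν|) := by
  have hp : (τ : ℝ) / t ≤ 1 := (div_le_one (by exact_mod_cast ht)).2 (by exact_mod_cast hτ)
  have hνone : |ν| ≤ 1 := (le_mul_of_one_le_right (abs_nonneg ν) hM).trans hνM
  have hVM' : ∀ i j, ((A ∩ Vij i j).ncard : ℝ) ≤ M := fun i j ↦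
    le_trans (mod_cast Set.ncard_le_ncard Set.inter_subset_right) (hVM i j)
  have hblock := fun j ↦ expect_card_eq_exp_sum_le (k := τ)
    (a := fun i ↦ ((A ∩ Vij i j).ncard : ℝ)) (by simpa using hτ) (fun _ ↦ Nat.cast_nonneg _)
    (hVM' · j) hνM
  have hrest := expect_subset_exp_ncard_inter_le (by positivity) hp hνone A V'.toFinite
  have hcard : (A.ncard : ℝ) = (A ∩ V').ncard + ∑ j, ∑ i, ((A ∩ Vij i j).ncard : ℝ) := by
    exact_mod_cast ncard_inter_iUnion_of_subset hVV' hV hA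
  have hvar : ν ^ 2 * (A ∩ V').ncard ≤ ν ^ 2 * M * (A ∩ V').ncard := by
    gcongr
    exact le_mul_of_one_le_right (sq_nonneg ν) hM
  simp only [Fintype.card_fin] at hblock
  calc 𝔼 ω : Omega9 n s t τ V', exp (ν * (A ∩ Z9 Vij ω).ncard)
      = 𝔼 ω : Omega9 n s t τ V', exp (∑ j, ν * ∑ i ∈ (ω.1 j).1, ((A ∩ Vij i j).ncard : ℝ) +
          ν * (A ∩ ω.2.1).ncard) := by
        refine expect_congr rfl fun ω _ ↦ ?_
        rw [Z9, ncard_inter_union_iUnion hVV' hV A ω.2.2.1, ← mul_sum, ← mul_add, add_comm]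
        push_cast
        rfl
    _ ≤ exp (∑ j, (ν * ((τ : ℝ) / t * ∑ i, ((A ∩ Vij i j).ncard : ℝ)) +
          ν ^ 2 * M * ∑ i, ((A ∩ Vij i j).ncard : ℝ)) +
          (ν * ((τ : ℝ) / t * (A ∩ V').ncard) + ν ^ 2 * (A ∩ V').ncard + |ν|)) := by
        convert expect_exp_sum_add_le hblock hrest
    _ ≤ exp (ν * ((τ : ℝ) / t * A.ncard) + ν ^ 2 * M * A.ncard + |ν|) := by
        rw [Real.exp_le_exp, hcard, sum_add_distrib, ← mul_sum, ← mul_sum, ← mul_sum]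
        linarith

lemma card_subtype_le_of_deviation {A : Set (Fin n)} {M ν δ : ℝ} {P : Omega9 n s t τ V' → Prop}
    (hM : 1 ≤ M) (hVM : ∀ i j, ((Vij i j).ncard : ℝ) ≤ M) (hνM : |ν| * M ≤ 1)
    (hA : A ⊆ V' ∪ ⋃ i, ⋃ j, Vij i j)
    (hP : ∀ ω, P ω → δ ≤ ν * ((A ∩ Z9 Vij ω).ncard - (τ : ℝ) / t * A.ncard)) :
    (Nat.card {ω // P ω} : ℝ) ≤
      exp (ν ^ 2 * M * A.ncard + |ν| - δ) * Nat.card (Omega9 n s t τ V') := by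
  classical
  convert card_subtype_le_of_expect_exp_le (δ := ν * ((τ : ℝ) / t * A.ncard) + δ)
    (expect_Omega9_exp_le ht hτ hVV' hV hM hVM hνM hA) fun ω hω ↦ ?_ using 3
  · ring
  · linarith [hP ω hω]

variable (hVd : ∀ i j, ((Vij i j).ncard : ℝ) ≤ d ^ (1 / 8 : ℝ))
include hVd

lemma card_subtype_le_of_rpow_deviation {A : Set (Fin n)} {σ : ℝ} {P : Omega9 n s t τ V' → Prop}
    (hd : 1 ≤ d) (hA : A ⊆ V' ∪ ⋃ i, ⋃ j, Vij i j) (hAd : (A.ncard : ℝ) ≤ 2 * d)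
    (hσ : |σ| = 1) (hP : ∀ ω, P ω → d ^ (2 / 3 : ℝ) ≤
      σ * ((A ∩ Z9 Vij ω).ncard - (τ : ℝ) / t * A.ncard)) :
    (Nat.card {ω // P ω} : ℝ) ≤
      exp (1 - d ^ (5 / 24 : ℝ) / 9) * Nat.card (Omega9 n s t τ V') := by
  obtain ⟨ν, hν₀, hνM, hexponent⟩ := exists_pos_mul_rpow_le_and_sub_le hd
  have habs : |ν * σ| = ν := by rw [abs_mul, hσ, mul_one, abs_of_pos hν₀]
  have hvar : (ν * σ) ^ 2 * d ^ (1 / 8 : ℝ) * A.ncard ≤ ν ^ 2 * d ^ (1 / 8 : ℝ) * (2 * d) := by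
    rw [← sq_abs (ν * σ), habs]
    gcongr
  have hdev : ∀ ω, P ω → ν * d ^ (2 / 3 : ℝ) ≤
      ν * σ * ((A ∩ Z9 Vij ω).ncard - (τ : ℝ) / t * A.ncard) := by
    intro ω hω
    rw [mul_assoc]
    exact mul_le_mul_of_nonneg_left (hP ω hω) hν₀.le
  refine (card_subtype_le_of_deviation ht hτ hVV' hV (Real.one_le_rpow hd (by norm_num)) hVd
    (habs.symm ▸ hνM) hA hdev).trans ?_
  rw [habs]
  refine mul_le_mul_of_nonneg_right (Real.exp_le_exp.2 ?_) (Nat.cast_nonneg _)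
  linarith

lemma card_upper_tail_le {A : Set (Fin n)} (hd : 1 ≤ d) (hd' : 0 ≤ d') (hd'd : d' ≤ d)
    (hA : ((A ∩ (V' ∪ ⋃ i, ⋃ j, Vij i j)).ncard : ℝ) ≤ d + d') :
    (Nat.card {ω : Omega9 n s t τ V' // ¬ ((A ∩ Z9 Vij ω).ncard : ℝ) ≤
        (τ : ℝ) / t * d + d' + d ^ (2 / 3 : ℝ)} : ℝ) ≤
      exp (1 - d ^ (5 / 24 : ℝ) / 9) * Nat.card (Omega9 n s t τ V') := by
  have hp : (τ : ℝ) / t ≤ 1 := (div_le_one (by exact_mod_cast ht)).2 (by exact_mod_cast hτ)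
  refine card_subtype_le_of_rpow_deviation ht hτ hVV' hV hVd hd Set.inter_subset_right
    (hA.trans (by linarith)) abs_one fun ω hω ↦ ?_
  rw [Set.inter_assoc, Set.inter_eq_right.2 (Z9_subset ω), one_mul]
  have hmean : (τ : ℝ) / t * (A ∩ (V' ∪ ⋃ i, ⋃ j, Vij i j)).ncard ≤ (τ : ℝ) / t * d + d' :=
    calc (τ : ℝ) / t * (A ∩ (V' ∪ ⋃ i, ⋃ j, Vij i j)).ncard
        ≤ (τ : ℝ) / t * (d + d') := by gcongr
      _ ≤ (τ : ℝ) / t * d + d' := by linarith [mul_le_of_le_one_left hd' hp]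
  linarith

-- No upper bound on `A` is assumed, so the deviation estimate is applied to a subset `W` of about
-- `d - d'` elements.
lemma card_lower_tail_le {A : Set (Fin n)} (hd : 1 ≤ d) (hd' : 0 ≤ d') (hd'd : d' ≤ d)
    (hA : d - d' ≤ ((A ∩ (V' ∪ ⋃ i, ⋃ j, Vij i j)).ncard : ℝ)) :
    (Nat.card {ω : Omega9 n s t τ V' // ¬ (τ : ℝ) / t * d - d' - d ^ (2 / 3 : ℝ) ≤
        (A ∩ Z9 Vij ω).ncard} : ℝ) ≤
      exp (1 - d ^ (5 / 24 : ℝ) / 9) * Nat.card (Omega9 n s t τ V') := by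
  have hp : (τ : ℝ) / t ≤ 1 := (div_le_one (by exact_mod_cast ht)).2 (by exact_mod_cast hτ)
  obtain ⟨W, hWA, hW⟩ := Set.exists_subset_card_eq (Nat.ceil_le.2 hA)
  obtain ⟨hWA, hWV⟩ := Set.subset_inter_iff.1 hWA
  have hW_le : (W.ncard : ℝ) ≤ 2 * d := by
    rw [hW]
    linarith [Nat.ceil_lt_add_one (sub_nonneg.2 hd'd)]
  refine card_subtype_le_of_rpow_deviation ht hτ hVV' hV hVd hd hWV hW_le
    (σ := -1) (by simp) fun ω hω ↦ ?_
  have hWZ : ((W ∩ Z9 Vij ω).ncard : ℝ) ≤ (A ∩ Z9 Vij ω).ncard := by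
    exact_mod_cast Set.ncard_le_ncard (Set.inter_subset_inter_left _ hWA)
  have hmean : (τ : ℝ) / t * d - d' ≤ (τ : ℝ) / t * W.ncard :=
    calc (τ : ℝ) / t * d - d' ≤ (τ : ℝ) / t * (d - d') := by
          linarith [mul_le_of_le_one_left hd' hp]
      _ ≤ (τ : ℝ) / t * W.ncard := by
          gcongr
          exact hW ▸ Nat.le_ceil _
  linarith

end

theorem statement9_general {K : ℝ} (hK : 0 < K) :
    ∀ᶠ n : ℕ in atTop, ∀ (A V' : Set (Fin n)) (d d' : ℝ) (t s τ : ℕ)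
      (Vij : Fin t → Fin s → Set (Fin n)),
      Real.logb 2 n ^ 5 ≤ d → 0 ≤ d' → d' ≤ d → 1 ≤ t → τ ≤ t →
      (∀ i j, Disjoint (Vij i j) V') →
      (∀ i j i' j', (i, j) ≠ (i', j') → Disjoint (Vij i j) (Vij i' j')) →
      (∀ i j, ((Vij i j).ncard : ℝ) ≤ d ^ (1 / 8 : ℝ)) →
      (((A ∩ (V' ∪ ⋃ i, ⋃ j, Vij i j)).ncard : ℝ) ≤ d + d' →
        (Nat.card {ω : Omega9 n s t τ V' // ¬ ((A ∩ Z9 Vij ω).ncard : ℝ) ≤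
            (τ : ℝ) / t * d + d' + d ^ (2 / 3 : ℝ)} : ℝ) ≤
          (n : ℝ) ^ (-K) * Nat.card (Omega9 n s t τ V')) ∧
      (d - d' ≤ ((A ∩ (V' ∪ ⋃ i, ⋃ j, Vij i j)).ncard : ℝ) →
        (Nat.card {ω : Omega9 n s t τ V' // ¬ (τ : ℝ) / t * d - d' - d ^ (2 / 3 : ℝ) ≤
            (A ∩ Z9 Vij ω).ncard} : ℝ) ≤
          (n : ℝ) ^ (-K) * Nat.card (Omega9 n s t τ V')) := by
  filter_upwards [eventually_one_le_and_exp_le_rpow_neg hK.le] with n hn A V' d d' t s τ Vij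
    hlog hd' hd'd ht hτ hVV' hV hVd
  obtain ⟨hd, hexp⟩ := hn d hlog
  exact ⟨fun hA ↦ (card_upper_tail_le ht hτ hVV' hV hVd hd hd' hd'd hA).trans (by gcongr),
    fun hA ↦ (card_lower_tail_le ht hτ hVV' hV hVd hd hd' hd'd hA).trans (by gcongr)⟩

end

/-- Degrees into the random set `Z` concentrate: the failure probability (here expressed
by counting outcomes in the finite uniform product space) is `n^{-ω(1)}`, i.e. for every
`K > 0` it is at most `n^{-K}` for all sufficiently large `n`. -/
theorem statement9 :
    ∀ K : ℝ, 0 < K → ∃ N : ℕ, ∀ n : ℕ, N ≤ n →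
      ∀ (G : SimpleGraph (Fin n)) (V' : Set (Fin n)) (d d' : ℝ) (t s τ : ℕ)
        (Vij : Fin t → Fin s → Set (Fin n)),
        Real.logb 2 n ^ 15 ≤ d → 0 ≤ d' → d' ≤ d →
        1 ≤ t → (t : ℝ) ≤ d → (τ = 1 ∨ τ = t - 1) →
        (∀ i j, Disjoint (Vij i j) V') →
        (∀ i j i' j', (i, j) ≠ (i', j') → Disjoint (Vij i j) (Vij i' j')) →
        (∀ i j, ((Vij i j).ncard : ℝ) ≤ d ^ ((1 : ℝ) / 8)) →
        ∀ v : Fin n,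
          (((G.neighborSet v ∩ (V' ∪ ⋃ i, ⋃ j, Vij i j)).ncard : ℝ) ≤ d + d' →
            (Nat.card {ω : Omega9 n s t τ V' //
                ¬ (((G.neighborSet v ∩ Z9 Vij ω).ncard : ℝ) ≤
                  (τ : ℝ) / t * d + d' + d ^ ((2 : ℝ) / 3))} : ℝ) ≤
              (n : ℝ) ^ (-K) * (Nat.card (Omega9 n s t τ V') : ℝ)) ∧
          (d - d' ≤ ((G.neighborSet v ∩ (V' ∪ ⋃ i, ⋃ j, Vij i j)).ncard : ℝ) →
            (Nat.card {ω : Omega9 n s t τ V' //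
                ¬ ((τ : ℝ) / t * d - d' - d ^ ((2 : ℝ) / 3) ≤
                  ((G.neighborSet v ∩ Z9 Vij ω).ncard : ℝ))} : ℝ) ≤
              (n : ℝ) ^ (-K) * (Nat.card (Omega9 n s t τ V') : ℝ)) := by
  intro K hK
  obtain ⟨N, hN⟩ := Filter.eventually_atTop.1 (statement9_general hK)
  refine ⟨max N 2, fun n hn G V' d d' t s τ Vij hlog hd' hd'd ht _ hτ hVV' hV hVd v ↦ ?_⟩
  have hn₂ : (2 : ℝ) ≤ n := by exact_mod_cast (le_max_right N 2).trans hn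
  have hlog₁ : 1 ≤ Real.logb 2 n := by
    rwa [Real.le_logb_iff_rpow_le one_lt_two (by linarith), Real.rpow_one]
  exact hN n ((le_max_left N 2).trans hn) (G.neighborSet v) V' d d' t s τ Vij
    ((pow_le_pow_right₀ hlog₁ (by norm_num)).trans hlog) hd' hd'd ht (by omega) hVV' hV hVd
end
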